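/- arXiv:1712.07338 — 4 statements merged into one kernel-verified Lean document; each statement's English description precedes it below -/
import Mathlib

section
/- Let m and n be positive integers with m odd and m ≡ 0 (mod 3), and let k be an integer with k ≡ 1 (mod 18) or k ≡ -1 (mod 18) and gcd(m, k) = 1. Let d₁ be the squarefree part of 3(4m^{3n} − k²). Then 3 divides the class number of the quadratic field ℚ(√d₁). -/
open NumberField
lemma h94_lattice {M N : Type*} [AddCommGroup M] [AddCommGroup N] [Module.Finite ℤ M]
    [Module.Finite ℤ N] [Module.Free ℤ N] (T : M →ₗ[ℤ] M) (Nm : M →ₗ[ℤ] N) (w : ℤ)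
    (hw : IsCoprime w 3) (hker : ∀ x, Nm x = 0 → w • x ∈ LinearMap.range T)
    (hT : ∀ x, ∃ y, T (T (T x)) = (3:ℤ) • y) :
    Module.finrank ℤ M ≤ 3 * Module.finrank ℤ N := by
  classical
  let b := Module.finBasis ℤ (LinearMap.range Nm)
  have hr : Module.finrank ℤ (LinearMap.range Nm) ≤ Module.finrank ℤ N :=
    Submodule.finrank_le _
  set r := Module.finrank ℤ (LinearMap.range Nm)
  have hb : ∀ i, ∃ v, Nm v = b i := fun i => (b i).2
  choose v hv using hb
  set C := Submodule.span ℤ (Set.range v) with hC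
  have h1 : ∀ x, ∃ c ∈ C, ∃ y, w • x = c + T y := by
    intro x
    have hx : Nm (x - ∑ i, (b.repr ⟨Nm x, x, rfl⟩ i) • v i) = 0 := by
      have h := congrArg Subtype.val (b.sum_repr ⟨Nm x, x, rfl⟩)
      simp only [AddSubmonoidClass.coe_finsetSum, SetLike.val_smul] at h
      rw [map_sub, map_sum]
      simp only [map_smul, hv]
      rw [h, sub_self]
    obtain ⟨y, hy⟩ := hker _ hx
    refine ⟨w • ∑ i, (b.repr ⟨Nm x, x, rfl⟩ i) • v i, ?_, y, ?_⟩
    · exact C.smul_mem _ (C.sum_mem fun i _ => C.smul_mem _ (Submodule.subset_span ⟨i, rfl⟩))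
    · rw [hy, smul_sub]; abel
  set C' := Submodule.span ℤ (Set.range (Sum.elim v (Sum.elim (T ∘ v) (T ∘ T ∘ v)))) with hC'
  have i0 : C ≤ C' := by
    rw [hC, Submodule.span_le]
    rintro _ ⟨i, rfl⟩
    exact Submodule.subset_span ⟨Sum.inl i, rfl⟩
  have i1 : C ≤ C'.comap T := by
    rw [hC, Submodule.span_le]
    rintro _ ⟨i, rfl⟩
    exact Submodule.subset_span ⟨Sum.inr (Sum.inl i), rfl⟩
  have i2 : C ≤ (C'.comap T).comap T := by
    rw [hC, Submodule.span_le]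
    rintro _ ⟨i, rfl⟩
    exact Submodule.subset_span ⟨Sum.inr (Sum.inr i), rfl⟩
  have h2 : ∀ x, ∃ c ∈ C', ∃ y, w ^ 3 • x = c + (3:ℤ) • y := by
    intro x
    obtain ⟨c, hc, y, hy⟩ := h1 x
    obtain ⟨d, hd, z, hz⟩ := h1 y
    obtain ⟨e, he, u, hu⟩ := h1 z
    obtain ⟨q, hq⟩ := hT u
    refine ⟨w ^ 2 • c + w • T d + T (T e), ?_, q, ?_⟩
    · refine C'.add_mem (C'.add_mem (C'.smul_mem _ ?_) (C'.smul_mem _ ?_)) ?_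
      · exact i0 hc
      · exact i1 hd
      · exact i2 he
    · have a1 : w • T y = T d + T (T z) := by rw [← map_smul, hz, map_add]
      have a2 : w • T (T z) = T (T e) + T (T (T u)) := by
        rw [← map_smul, ← map_smul, hu, map_add, map_add]
      rw [← hq]
      calc w ^ 3 • x = w ^ 2 • (w • x) := by rw [smul_smul]; ring_nf
        _ = w ^ 2 • c + w • (w • T y) := by rw [hy, smul_add, smul_smul w w]; ring_nf
        _ = _ := by rw [a1, smul_add, a2]; abel
  have hfin : Module.finrank ℤ C' ≤ 3 * r := by
    have := finrank_range_le_card (R := ℤ) (Sum.elim v (Sum.elim (T ∘ v) (T ∘ T ∘ v)))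
    simp only [Fintype.card_sum, Fintype.card_fin] at this
    have h' : Module.finrank ℤ C' ≤ r + (r + r) := this
    omega
  obtain ⟨a, c, hac⟩ := hw.pow_left (m := 3)
  have hQ : (⊤ : Submodule ℤ (M ⧸ C')) ≤ Ideal.span {(3:ℤ)} • ⊤ := by
    rintro x -
    obtain ⟨x, rfl⟩ := C'.mkQ_surjective x
    obtain ⟨e, he, y, hy⟩ := h2 x
    have : C'.mkQ x = (3:ℤ) • C'.mkQ (a • y + c • x) := by
      have h3 : x = a • (w ^ 3 • x) + c • (3:ℤ) • x := by
        rw [smul_smul, smul_smul, ← add_smul, hac, one_smul]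
      conv_lhs => rw [h3, hy]
      have : C'.mkQ e = 0 := by simpa using he
      simp only [map_add, map_smul, this, smul_zero, zero_add, smul_add]
      rw [smul_comm a, smul_comm c]
    rw [this]
    exact Submodule.smul_mem_smul (Ideal.mem_span_singleton_self _) trivial
  obtain ⟨q, hq1, hq2⟩ := Submodule.exists_sub_one_mem_and_smul_eq_zero_of_fg_of_le_smul _ _
    Module.Finite.fg_top hQ
  have hq0 : q ≠ 0 := by
    rintro rfl
    rw [Ideal.mem_span_singleton] at hq1
    norm_num at hq1
  have hz : Module.finrank ℤ (M ⧸ C') = 0 := by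
    rw [Module.finrank_eq_zero_iff_isTorsion]
    intro x
    exact ⟨⟨q, mem_nonZeroDivisors_of_ne_zero hq0⟩, hq2 x trivial⟩
  have := Submodule.finrank_quotient_add_finrank C'
  omega

open scoped Pointwise
lemma h94_descent {K L : Type*} [Field K] [NumberField K] [Field L] [NumberField L] [Algebra K L]
    [IsGalois K L]
    (hunr : ∀ P : Ideal (𝓞 L), P.IsPrime → P ≠ ⊥ → ∀ g : Gal(L/K), g ≠ 1 → ∃ x : 𝓞 L, g • x - x ∉ P)
    (I : Ideal (𝓞 L)) (hI0 : I ≠ ⊥) (hI : ∀ g : Gal(L/K), g • I = I) :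
    ∃ J : Ideal (𝓞 K), J.map (algebraMap (𝓞 K) (𝓞 L)) = I := by
  classical
  induction I using WellFoundedGT.induction with
  | ind I ih =>
  by_cases htop : I = ⊤
  · exact ⟨⊤, by rw [htop, Ideal.map_top]⟩
  obtain ⟨P, hPm, hIP⟩ := Ideal.exists_le_maximal I htop
  have hP0 : P ≠ ⊥ := fun h => hI0 (by rw [h] at hIP; exact le_bot_iff.mp hIP)
  set p := P.under (𝓞 K) with hp
  have hp0 : p ≠ ⊥ := Ideal.IsIntegral.comap_ne_bot _ hP0
  have hpm : p.IsMaximal := Ideal.isMaximal_comap_of_isIntegral_of_isMaximal P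
  have hlo : P.LiesOver p := ⟨rfl⟩
  have hle : I ≤ p.map (algebraMap (𝓞 K) (𝓞 L)) := by
    rw [Ideal.map_algebraMap_eq_finsetProd_pow hp0, ← Ideal.dvd_iff_le]
    apply Finset.prod_dvd_of_coprime
    · intro Q hQ R hR hne
      simp only [Set.coe_toFinset] at hQ hR
      have := hQ.1; have := hQ.2; have := hR.1; have := hR.2
      have h1 : Q.IsMaximal := Ideal.IsMaximal.of_liesOver_isMaximal Q p
      have h2 : R.IsMaximal := Ideal.IsMaximal.of_liesOver_isMaximal R p
      apply IsCoprime.pow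
      exact Ideal.isCoprime_of_isMaximal hne
    · intro Q hQ
      rw [Set.mem_toFinset] at hQ
      have := hQ.1; have := hQ.2
      obtain ⟨g, hg⟩ := Ideal.exists_smul_eq_of_isGaloisGroup p P Q Gal(L/K)
      have hQ0 : Q ≠ ⊥ := Ideal.ne_bot_of_liesOver_of_ne_bot hp0 Q
      have he : Q.ramificationIdx (𝓞 K) = 1 := by
        rw [← Ideal.ramificationIdxIn_eq_ramificationIdx p Q Gal(L/K),
          ← Ideal.card_inertia_eq_ramificationIdxIn (G := Gal(L/K)) p Q, Subgroup.card_eq_one, eq_bot_iff]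
        intro g hg
        by_contra hne
        obtain ⟨x, hx⟩ := hunr Q inferInstance hQ0 g hne
        exact hx (hg x)
      rw [he, pow_one, Ideal.dvd_iff_le, ← hI g, ← hg]
      rw [Ideal.pointwise_smul_def, Ideal.pointwise_smul_def]
      exact Ideal.map_mono hIP
  obtain ⟨I', hI'⟩ := Ideal.dvd_iff_le.mpr hle
  have hpL0 : p.map (algebraMap (𝓞 K) (𝓞 L)) ≠ ⊥ := by
    intro h; rw [h] at hle; exact hI0 (le_bot_iff.mp hle)
  have hI'0 : I' ≠ ⊥ := by
    rintro rfl
    exact hI0 (by rw [hI', Ideal.mul_bot])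
  have hgp : ∀ g : Gal(L/K), g • p.map (algebraMap (𝓞 K) (𝓞 L)) = p.map (algebraMap (𝓞 K) (𝓞 L)) := by
    intro g
    rw [Ideal.pointwise_smul_def, Ideal.map_map]
    congr 1
    ext x
    simp [smul_algebraMap]
  have hlt : I < I' := by
    refine lt_of_le_of_ne (hI' ▸ Ideal.mul_le_right) ?_
    intro h
    rw [← h] at hI'
    have h1 : p.map (algebraMap (𝓞 K) (𝓞 L)) = 1 := by
      have : (1 : Ideal (𝓞 L)) * I = p.map (algebraMap (𝓞 K) (𝓞 L)) * I := by rw [one_mul]; exact hI'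
      exact (mul_right_cancel₀ hI0 this).symm
    have : p.map (algebraMap (𝓞 K) (𝓞 L)) ≤ P := Ideal.map_comap_le
    rw [h1, Ideal.one_eq_top, top_le_iff] at this
    exact hPm.ne_top this
  obtain ⟨J, hJ⟩ := ih I' hlt hI'0 (fun g => by
    have h := hI g
    rw [hI', smul_mul', hgp g] at h
    exact mul_left_cancel₀ hpL0 h)
  exact ⟨p * J, by rw [Ideal.map_mul, hJ, ← hI']⟩

lemma h94_gal {K L : Type*} [Field K] [Field L] [Algebra K L] [FiniteDimensional K L]
    [IsGalois K L] (hdeg : Module.finrank K L = 3) (σ : Gal(L/K)) (hσ : σ ≠ 1) :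
    σ ^ 3 = 1 ∧ (∀ g : Gal(L/K), g = 1 ∨ g = σ ∨ g = σ ^ 2) ∧ σ ^ 2 ≠ 1 ∧ σ ^ 2 ≠ σ := by
  classical
  have hc : Nat.card Gal(L/K) = 3 := by rw [IsGalois.card_aut_eq_finrank, hdeg]
  have hc' : Fintype.card Gal(L/K) = 3 := by rw [← Nat.card_eq_fintype_card, hc]
  have h3 : σ ^ 3 = 1 := by rw [← hc]; exact pow_card_eq_one'
  have h2 : σ ^ 2 ≠ 1 := by
    intro h
    apply hσ
    calc σ = σ ^ 3 * (σ ^ 2)⁻¹ := by group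
      _ = 1 := by rw [h3, h]; simp
  have h1 : σ ^ 2 ≠ σ := by
    intro h
    apply hσ
    calc σ = σ ^ 2 * σ⁻¹ := by group
      _ = 1 := by rw [h]; simp
  refine ⟨h3, ?_, h2, h1⟩
  have : (Finset.univ : Finset Gal(L/K)) = {1, σ, σ ^ 2} := by
    symm
    apply Finset.eq_univ_of_card
    rw [hc', Finset.card_eq_three]
    exact ⟨1, σ, σ ^ 2, hσ.symm, h2.symm, h1.symm, rfl⟩
  intro g
  have := Finset.mem_univ g
  simp_all

lemma h94_norm {K L : Type*} [Field K] [NumberField K] [Field L] [NumberField L] [Algebra K L]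
    [IsGalois K L] (hdeg : Module.finrank K L = 3) (σ : Gal(L/K)) (hσ : σ ≠ 1) (x : 𝓞 L) :
    algebraMap (𝓞 K) (𝓞 L) (RingOfIntegers.norm K x) = x * σ • x * σ • σ • x := by
  classical
  obtain ⟨h3, hall, h2, h1⟩ := h94_gal hdeg σ hσ
  have hu : (Finset.univ : Finset Gal(L/K)) = {1, σ, σ ^ 2} := by
    ext g; simpa using hall g
  apply RingOfIntegers.ext
  have : algebraMap K L (Algebra.norm K (x : L)) = _ := Algebra.norm_eq_prod_automorphisms K (x : L)
  rw [hu, Finset.prod_insert (by simp [hσ.symm, h2.symm]), Finset.prod_insert (by simp [h1.symm]),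
    Finset.prod_singleton] at this
  have e : ((algebraMap (𝓞 K) (𝓞 L) (RingOfIntegers.norm K x) : 𝓞 L) : L)
    = algebraMap K L (Algebra.norm K (x : L)) := by
    rfl
  rw [e, this, mul_assoc]
  rfl

lemma h94_units {K L : Type*} [Field K] [NumberField K] [Field L] [NumberField L] [Algebra K L]
    [IsGalois K L] (hdeg : Module.finrank K L = 3) (σ : Gal(L/K)) (hσ : σ ≠ 1)
    (hω : ∀ x : K, x ^ 2 + x + 1 ≠ 0) :
    ∃ η : (𝓞 L)ˣ, (η : 𝓞 L) * σ • (η : 𝓞 L) * σ • σ • (η : 𝓞 L) = 1 ∧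
      ¬ ∃ ε : (𝓞 L)ˣ, (η : 𝓞 L) * σ • (ε : 𝓞 L) = ε := by
  classical
  by_contra! hcon
  obtain ⟨h3, hall, h2, h1⟩ := h94_gal hdeg σ hσ
  have hw : IsCoprime (Units.torsionOrder K : ℤ) 3 := by
    rw [Int.isCoprime_iff_gcd_eq_one, Int.gcd_comm]
    change Nat.Coprime 3 (Units.torsionOrder K)
    rw [Nat.Prime.coprime_iff_not_dvd Nat.prime_three]
    intro h
    obtain ⟨ζ, hζ⟩ := exists_prime_orderOf_dvd_card' (G := Units.torsion K) 3
      h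
    have hz3 : ζ ^ 3 = 1 := by rw [← hζ]; exact pow_orderOf_eq_one ζ
    have hz1 : ζ ≠ 1 := by rintro rfl; simp at hζ
    let z : K := (((ζ : (𝓞 K)ˣ) : 𝓞 K) : K)
    have e3 : z ^ 3 = 1 := by
      have := congrArg (fun y : Units.torsion K => ((((y : (𝓞 K)ˣ) : 𝓞 K) : K))) hz3
      simpa using this
    have e1 : z ≠ 1 := by
      intro h
      apply hz1
      apply Subtype.ext
      apply Units.ext
      apply RingOfIntegers.ext
      exact h
    apply hω z
    have : (z - 1) * (z ^ 2 + z + 1) = 0 := by linear_combination e3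
    exact (mul_eq_zero.mp this).resolve_left (sub_ne_zero.mpr e1)
  let s : (𝓞 L)ˣ →* (𝓞 L)ˣ := Units.map (MulSemiringAction.toRingHom Gal(L/K) (𝓞 L) σ).toMonoidHom
  have hs : ∀ u, ((s u : (𝓞 L)ˣ) : 𝓞 L) = σ • (u : 𝓞 L) := fun u => rfl
  have hsss : ∀ u, s (s (s u)) = u := by
    intro u
    ext1
    rw [hs, hs, hs, smul_smul, smul_smul, ← pow_two, ← pow_succ, h3, one_smul]
  let S : Additive (𝓞 L)ˣ →ₗ[ℤ] Additive (𝓞 L)ˣ := (MonoidHom.toAdditive s).toIntLinearMap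
  have hSSS : ∀ u, S (S (S u)) = u := hsss
  let ν : (𝓞 L)ˣ →* (𝓞 K)ˣ := Units.map (RingOfIntegers.norm K)
  let lg := Units.logEmbedding K
  let Nm : Additive (𝓞 L)ˣ →ₗ[ℤ] Units.unitLattice K :=
    LinearMap.codRestrict (Units.unitLattice K)
      (lg.toIntLinearMap.comp (MonoidHom.toAdditive ν).toIntLinearMap)
      (fun x => ⟨(MonoidHom.toAdditive ν) x, trivial, rfl⟩)
  have key := h94_lattice (LinearMap.id - S) Nm (Units.torsionOrder K) hw ?_ ?_
  · rw [Units.finrank_eq, Units.unitLattice_rank] at key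
    have := IsUnramifiedAtInfinitePlaces_of_odd_finrank (k := K) (K := L) (by rw [hdeg]; decide)
    have hc := IsUnramifiedAtInfinitePlaces.card_infinitePlace K L
    rw [hdeg] at hc
    unfold Units.rank at key
    have : 0 < Fintype.card (InfinitePlace K) := Fintype.card_pos
    omega
  · intro x hx
    have hx' : ν x.toMul ∈ Units.torsion K := by
      rw [← Units.dirichletUnitTheorem.logEmbedding_eq_zero_iff]
      exact congrArg Subtype.val hx
    have hx2 : ν (x.toMul ^ Units.torsionOrder K) = 1 := by
      have : (⟨ν x.toMul, hx'⟩ : Units.torsion K) ^ Units.torsionOrder K = 1 := by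
        exact pow_card_eq_one'
      rw [map_pow]
      exact congrArg Subtype.val this
    set η := x.toMul ^ Units.torsionOrder K with hη
    have hnorm : (η : 𝓞 L) * σ • (η : 𝓞 L) * σ • σ • (η : 𝓞 L) = 1 := by
      rw [← h94_norm hdeg σ hσ]
      have := congrArg Units.val hx2
      change RingOfIntegers.norm K (η : 𝓞 L) = 1 at this
      rw [this, map_one]
    obtain ⟨ε, hε⟩ := hcon η hnorm
    refine ⟨Additive.ofMul ε, ?_⟩
    have : η * s ε = ε := by ext1; simpa [hs] using hε
    have h' : (Additive.ofMul η : Additive (𝓞 L)ˣ) + S (Additive.ofMul ε) = Additive.ofMul ε := this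
    have h'' : (Additive.ofMul η : Additive (𝓞 L)ˣ) = (Units.torsionOrder K : ℤ) • x := by
      rw [hη, natCast_zsmul]; rfl
    rw [← h'', LinearMap.sub_apply, LinearMap.id_apply]
    exact sub_eq_iff_eq_add.mpr h'.symm
  · intro x
    refine ⟨S (S x) - S x, ?_⟩
    simp only [LinearMap.sub_apply, LinearMap.id_apply, map_sub]
    rw [hSSS]
    abel

lemma h94_hilbert90 {K L : Type*} [Field K] [NumberField K] [Field L] [NumberField L] [Algebra K L]
    [IsGalois K L] (hdeg : Module.finrank K L = 3) (σ : Gal(L/K)) (hσ : σ ≠ 1) (η : 𝓞 L)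
    (hη : η * σ • η * σ • σ • η = 1) : ∃ α : 𝓞 L, α ≠ 0 ∧ η * σ • α = α := by
  classical
  obtain ⟨h3, hall, h2, h1⟩ := h94_gal hdeg σ hσ
  have hη0 : η ≠ 0 := by rintro rfl; simp at hη
  let f : Gal(L/K) → (𝓞 L →* 𝓞 L) := fun g => (MulSemiringAction.toRingHom Gal(L/K) (𝓞 L) g).toMonoidHom
  have hf : Function.Injective f := by
    intro g h hgh
    have := IsGaloisGroup.faithful (G := Gal(L/K)) (𝓞 K) (B := 𝓞 L)
    apply FaithfulSMul.eq_of_smul_eq_smul (M := Gal(L/K)) (α := 𝓞 L)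
    intro a
    exact DFunLike.congr_fun hgh a
  have hli := (linearIndependent_monoidHom (𝓞 L) (𝓞 L)).comp f hf
  by_contra! hcon
  have hsss : ∀ x : 𝓞 L, σ • σ • σ • x = x := fun x => by
    rw [smul_smul, smul_smul, ← pow_two, ← pow_succ, h3, one_smul]
  have hz : ∀ x : 𝓞 L, x + η * σ • x + η * σ • η * σ • σ • x = 0 := by
    intro x
    by_contra h0
    apply hcon _ h0
    simp only [smul_add, smul_mul', hsss]
    linear_combination x * hη
  have hu : (Finset.univ : Finset Gal(L/K)) = {1, σ, σ ^ 2} := by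
    ext g; simpa using hall g
  rw [Fintype.linearIndependent_iff] at hli
  have := hli (fun g => if g = 1 then 1 else if g = σ then η else η * σ • η) (by
    rw [hu, Finset.sum_insert (by simp [hσ.symm, h2.symm]), Finset.sum_insert (by simp [h1.symm]),
      Finset.sum_singleton]
    funext x
    have e1 : f 1 x = x := one_smul _ x
    have e2 : f σ x = σ • x := rfl
    have e3 : f (σ ^ 2) x = σ • σ • x := by rw [smul_smul, ← pow_two]; rfl
    simp only [if_true, hσ, h2, h1, if_false, Function.comp, Pi.add_apply, Pi.smul_apply, e1, e2, e3,
      smul_eq_mul, Pi.zero_apply]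
    rw [← hz x]; ring) 1
  simp at this

theorem h94 {K L : Type*} [Field K] [NumberField K] [Field L] [NumberField L] [Algebra K L]
    [IsGalois K L] (hdeg : Module.finrank K L = 3) (σ : Gal(L/K)) (hσ : σ ≠ 1)
    (hω : ∀ x : K, x ^ 2 + x + 1 ≠ 0)
    (hunr : ∀ P : Ideal (𝓞 L), P.IsPrime → P ≠ ⊥ → ∃ x : 𝓞 L, σ • x - x ∉ P) :
    3 ∣ NumberField.classNumber K := by
  classical
  obtain ⟨h3, hall, h2, h1⟩ := h94_gal hdeg σ hσ
  obtain ⟨η, hη, hne⟩ := h94_units hdeg σ hσ hω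
  obtain ⟨α, hα0, hα⟩ := h94_hilbert90 hdeg σ hσ η hη
  have hσI : σ • (Ideal.span {α} : Ideal (𝓞 L)) = Ideal.span {α} := by
    rw [Ideal.pointwise_smul_def, Ideal.map_span, Set.image_singleton,
      Ideal.span_singleton_eq_span_singleton]
    refine ⟨η, ?_⟩
    rw [mul_comm]
    exact hα
  have hunr' : ∀ P : Ideal (𝓞 L), P.IsPrime → P ≠ ⊥ → ∀ g : Gal(L/K), g ≠ 1 →
      ∃ x : 𝓞 L, g • x - x ∉ P := by
    intro P hP hP0 g hg
    by_contra! hc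
    obtain ⟨x, hx⟩ := hunr P hP hP0
    have hgi : g ∈ P.inertia Gal(L/K) := fun x => hc x
    rcases hall g with rfl | rfl | rfl
    · exact hg rfl
    · exact hx (hc x)
    · have : σ = (σ ^ 2) ^ 2 := by
        calc σ = σ ^ 3 * σ := by rw [h3, one_mul]
          _ = _ := by group
      have hσi : σ ∈ P.inertia Gal(L/K) := by rw [this]; exact Subgroup.pow_mem _ hgi 2
      exact hx (hσi x)
  obtain ⟨J, hJ⟩ := h94_descent hunr' (Ideal.span {α}) (by simpa using hα0) (by
    intro g
    rcases hall g with rfl | rfl | rfl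
    · exact one_smul _ _
    · exact hσI
    · rw [pow_two, mul_smul, hσI, hσI])
  have hJ0 : J ≠ ⊥ := by
    rintro rfl
    rw [Ideal.map_bot] at hJ
    exact hα0 (by simpa using hJ.symm)
  have hJ3 : (J ^ 3).IsPrincipal := by
    have hfr : Module.finrank (𝓞 K) (𝓞 L) = 3 := by
      rw [← hdeg]; exact (IsFractionRing.finrank_eq (𝓞 K) K (𝓞 L) L).symm
    have h := Ideal.relNorm_algebraMap (𝓞 L) J
    rw [hJ, hfr, Ideal.relNorm_singleton] at h
    rw [← h]
    exact ⟨_, rfl⟩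
  have hJn : ¬ J.IsPrincipal := by
    rintro ⟨a, ha⟩
    rw [ha] at hJ
    change Ideal.map _ (Ideal.span {a}) = _ at hJ
    rw [Ideal.map_span, Set.image_singleton, Ideal.span_singleton_eq_span_singleton] at hJ
    obtain ⟨ε, hε⟩ := hJ
    apply hne
    refine ⟨ε, ?_⟩
    have ha0 : algebraMap (𝓞 K) (𝓞 L) a ≠ 0 := by
      intro h; rw [h, zero_mul] at hε; exact hα0 hε.symm
    rw [← hε, smul_mul', smul_algebraMap] at hα
    apply mul_left_cancel₀ ha0
    linear_combination hα
  let c := ClassGroup.mk0 (⟨J, mem_nonZeroDivisors_of_ne_zero hJ0⟩ : nonZeroDivisors (Ideal (𝓞 K)))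
  have hc3 : c ^ 3 = 1 := by
    rw [← map_pow, ClassGroup.mk0_eq_one_iff]
    exact hJ3
  have hc1 : c ≠ 1 := by
    intro h
    rw [ClassGroup.mk0_eq_one_iff] at h
    exact hJn h
  have : Fact (Nat.Prime 3) := ⟨Nat.prime_three⟩
  rw [← orderOf_eq_prime hc3 hc1]
  exact orderOf_dvd_card

lemma cub_no_rat_root (M k : ℤ) (hM : Odd M) (hk : Odd k) (q : ℚ) : q ^ 3 - 3 * M * q - k ≠ 0 := by
  intro h
  have hint : IsIntegral ℤ q := by
    refine ⟨Polynomial.X ^ 3 - Polynomial.C (3 * M) * Polynomial.X - Polynomial.C k, ?_, ?_⟩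
    · monicity!
    · simp only [Polynomial.eval₂_sub, Polynomial.eval₂_mul, Polynomial.eval₂_pow, Polynomial.eval₂_X,
        Polynomial.eval₂_C]
      simpa using h
  obtain ⟨x, rfl⟩ := IsIntegrallyClosed.isIntegral_iff.mp hint
  simp only [algebraMap_int_eq, eq_intCast] at h
  have h' : x ^ 3 - 3 * M * x - k = 0 := by exact_mod_cast h
  obtain ⟨a, rfl⟩ := hM
  obtain ⟨b, rfl⟩ := hk
  rcases Int.even_or_odd' x with ⟨y, rfl | rfl⟩
  · ring_nf at h'; omega
  · ring_nf at h'; omega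

lemma cub_irred (M k : ℤ) (hM : Odd M) (hk : Odd k) {K : Type*} [Field K] [NumberField K]
    (hdeg : Module.finrank ℚ K = 2) :
    Irreducible (Polynomial.X ^ 3 - Polynomial.C (3 * M : K) * Polynomial.X - Polynomial.C (k : K)) := by
  have hd : (Polynomial.X ^ 3 - Polynomial.C (3 * M : K) * Polynomial.X - Polynomial.C (k : K)).natDegree = 3 := by
    compute_degree!
  rw [Polynomial.irreducible_iff_roots_eq_zero_of_degree_le_three (by rw [hd]; norm_num) (by rw [hd])]
  rw [Multiset.eq_zero_iff_forall_notMem]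
  intro x hx
  have hx := Polynomial.isRoot_of_mem_roots hx
  simp only [Polynomial.IsRoot.def, Polynomial.eval_sub, Polynomial.eval_pow, Polynomial.eval_X,
    Polynomial.eval_mul, Polynomial.eval_C] at hx
  set g : Polynomial ℚ := Polynomial.X ^ 3 - Polynomial.C (3 * M : ℚ) * Polynomial.X - Polynomial.C (k : ℚ) with hg
  have hgd : g.natDegree = 3 := by rw [hg]; compute_degree!
  have hgm : g.Monic := by rw [hg]; monicity!
  have hgi : Irreducible g := by
    rw [Polynomial.irreducible_iff_roots_eq_zero_of_degree_le_three (by rw [hgd]; norm_num) (by rw [hgd])]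
    rw [Multiset.eq_zero_iff_forall_notMem]
    intro q hq
    have hq := Polynomial.isRoot_of_mem_roots hq
    apply cub_no_rat_root M k hM hk q
    simpa [hg] using hq
  have hmp : g = minpoly ℚ x := by
    apply minpoly.eq_of_irreducible_of_monic hgi _ hgm
    simp [hg, hx]
  have := minpoly.natDegree_le (A := ℚ) x
  rw [← hmp, hgd, hdeg] at this
  omega

lemma cub_rat_sq (q : ℚ) (N : ℤ) (h : q ^ 2 = N) : ∃ x : ℤ, x ^ 2 = N := by
  have hint : IsIntegral ℤ q := by
    refine ⟨Polynomial.X ^ 2 - Polynomial.C N, ?_, ?_⟩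
    · monicity!
    · simp only [Polynomial.eval₂_sub, Polynomial.eval₂_mul, Polynomial.eval₂_pow, Polynomial.eval₂_X,
        Polynomial.eval₂_C]
      simp [h]
  obtain ⟨x, rfl⟩ := IsIntegrallyClosed.isIntegral_iff.mp hint
  simp only [algebraMap_int_eq, eq_intCast] at h
  exact ⟨x, by exact_mod_cast h⟩

lemma cub_omega (D : ℤ) (h3 : ¬ (3:ℤ) ∣ D) (h8 : D % 8 = 3) {K : Type*} [Field K] [NumberField K]
    (hdeg : Module.finrank ℚ K = 2) (S : K) (hS : S ^ 2 = 3 * D) (x : K) : x ^ 2 + x + 1 ≠ 0 := by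
  intro hx
  have hSr : ∀ q : ℚ, S ≠ q := by
    intro q hq
    rw [hq] at hS
    obtain ⟨y, hy⟩ := cub_rat_sq q (3 * D) (by
      have : ((q ^ 2 : ℚ) : K) = ((3 * D : ℚ) : K) := by push_cast; exact hS
      have := Rat.cast_injective this
      push_cast; exact this)
    have : (3:ℤ) ∣ y := Int.prime_three.dvd_of_dvd_pow (Dvd.intro _ hy.symm)
    obtain ⟨z, rfl⟩ := this
    exact h3 ⟨z ^ 2, by linarith⟩
  have hli : LinearIndependent ℚ ![(1:K), S] := by
    rw [LinearIndependent.pair_iff]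
    intro s t h
    simp only [Algebra.smul_def, eq_ratCast, mul_one] at h
    have ht : t = 0 := by
      by_contra ht
      apply hSr (-s / t)
      push_cast
      rw [eq_div_iff (by exact_mod_cast ht)]
      linear_combination h
    subst ht
    simpa using h
  have hspan := hli.span_eq_top_of_card_eq_finrank (by simp [hdeg])
  have hw : 2 * x + 1 ∈ Submodule.span ℚ (Set.range ![(1:K), S]) := by rw [hspan]; trivial
  rw [Matrix.range_cons, Matrix.range_cons, Matrix.range_empty, Set.union_empty,
    Set.singleton_union, Submodule.mem_span_pair] at hw
  obtain ⟨a, b, hab⟩ := hw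
  simp only [Algebra.smul_def, eq_ratCast, mul_one] at hab
  have hsq : ((a ^ 2 + 3 * D * b ^ 2 + 3 : ℚ) : K) + ((2 * a * b : ℚ) : K) * S = 0 := by
    push_cast
    have : (a + b * S) ^ 2 = -3 := by rw [hab]; linear_combination 4 * hx
    linear_combination this - (b:K) ^ 2 * hS
  have h0 : 2 * a * b = 0 := by
    by_contra hne
    apply hSr (-(a ^ 2 + 3 * D * b ^ 2 + 3) / (2 * a * b))
    rw [Rat.cast_div, eq_div_iff (by exact_mod_cast hne)]
    rw [Rat.cast_neg]
    linear_combination hsq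
  rw [h0, Rat.cast_zero, zero_mul, add_zero] at hsq
  have hsq' : a ^ 2 + 3 * D * b ^ 2 + 3 = 0 := by exact_mod_cast hsq
  rcases mul_eq_zero.mp h0 with h | h
  · have ha : a = 0 := by linarith
    subst ha
    have hb : b ≠ 0 := by rintro rfl; norm_num at hsq'
    obtain ⟨y, hy⟩ := cub_rat_sq (1 / b) (-D) (by
      rw [div_pow, div_eq_iff (pow_ne_zero 2 hb)]; push_cast; linarith)
    have : y ^ 2 % 8 = 5 := by omega
    have h8' : y % 8 = 0 ∨ y % 8 = 1 ∨ y % 8 = 2 ∨ y % 8 = 3 ∨ y % 8 = 4 ∨ y % 8 = 5 ∨ y % 8 = 6 ∨ y % 8 = 7 := by omega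
    rcases h8' with h | h | h | h | h | h | h | h <;> simp [pow_two, Int.mul_emod, h] at this
  · subst h
    nlinarith [sq_nonneg a]

lemma cub_core (M k : ℤ) (hM3 : (3:ℤ) ∣ M) (hk9 : (9:ℤ) ∣ k - 1)
    (hcop : IsCoprime M k) {K L : Type*} [Field K] [NumberField K] [Field L] [NumberField L]
    [Algebra K L] (hω : ∀ x : K, x ^ 2 + x + 1 ≠ 0) (hfr : Module.finrank K L = 3)
    (S : K) (hS : S ^ 2 = 3 * (4 * M ^ 3 - k ^ 2)) (t : L) (ht : t ^ 3 - 3 * M * t - k = 0)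
    (hM0 : t ^ 2 - M ≠ 0) (htop : Algebra.adjoin K {t} = ⊤) :
    3 ∣ NumberField.classNumber K := by
  classical
  set s : L := algebraMap K L S with hs
  have hs2 : s ^ 2 = 3 * (4 * M ^ 3 - k ^ 2) := by
    rw [hs, ← map_pow, hS, map_mul, map_sub, map_mul, map_pow, map_pow, map_ofNat, map_ofNat,
      map_intCast, map_intCast]
  -- splitting
  set f : Polynomial K := Polynomial.X ^ 3 - Polynomial.C (3 * M : K) * Polynomial.X - Polynomial.C (k : K) with hf
  have hfd : f.natDegree = 3 := by rw [hf]; compute_degree!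
  have hf0 : f ≠ 0 := by intro h; rw [h] at hfd; simp at hfd
  set ρ : L := s / (t ^ 2 - M) with hρ
  have hρ2 : ρ ^ 2 = 3 * (4 * M - t ^ 2) := by
    rw [hρ, div_pow, div_eq_iff (pow_ne_zero 2 hM0), hs2]
    linear_combination (3 * (t ^ 3 - 3 * M * t + k)) * ht
  have hspl : (f.map (algebraMap K L)).Splits := by
    have : f.map (algebraMap K L) = (Polynomial.X - Polynomial.C t) *
        (Polynomial.X - Polynomial.C ((-t + ρ) / 2)) * (Polynomial.X - Polynomial.C ((-t - ρ) / 2)) := by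
      have e1 : t + (-t + ρ) / 2 + (-t - ρ) / 2 = 0 := by ring
      have e2 : t * ((-t + ρ) / 2) + t * ((-t - ρ) / 2) + ((-t + ρ) / 2) * ((-t - ρ) / 2) = -(3 * M) := by
        linear_combination (-1 / 4) * hρ2
      have e3 : t * ((-t + ρ) / 2) * ((-t - ρ) / 2) = k := by
        linear_combination (-t / 4) * hρ2 + ht
      generalize (-t + ρ) / 2 = u at *
      generalize (-t - ρ) / 2 = v at *
      have hmap : f.map (algebraMap K L) =
          Polynomial.X ^ 3 - Polynomial.C (3 * M : L) * Polynomial.X - Polynomial.C (k : L) := by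
        rw [hf, Polynomial.map_sub, Polynomial.map_sub, Polynomial.map_mul, Polynomial.map_pow,
          Polynomial.map_X, Polynomial.map_C, Polynomial.map_C, map_mul, map_intCast, map_intCast,
          map_ofNat]
      have c1 : Polynomial.C t + Polynomial.C u + Polynomial.C v = 0 := by
        rw [← Polynomial.C_add, ← Polynomial.C_add, e1, Polynomial.C_0]
      have c2 : Polynomial.C t * Polynomial.C u + Polynomial.C t * Polynomial.C v +
          Polynomial.C u * Polynomial.C v = - Polynomial.C (3 * M : L) := by
        rw [← Polynomial.C_mul, ← Polynomial.C_mul, ← Polynomial.C_mul, ← Polynomial.C_add,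
          ← Polynomial.C_add, e2, Polynomial.C_neg]
      have c3 : Polynomial.C t * Polynomial.C u * Polynomial.C v = Polynomial.C (k : L) := by
        rw [← Polynomial.C_mul, ← Polynomial.C_mul, e3]
      rw [hmap]
      linear_combination Polynomial.X ^ 2 * c1 - Polynomial.X * c2 + c3
    rw [this]
    exact ((Polynomial.Splits.X_sub_C _).mul (Polynomial.Splits.X_sub_C _)).mul (Polynomial.Splits.X_sub_C _)
  have hsf : f.IsSplittingField K L := by
    refine ⟨hspl, ?_⟩
    rw [eq_top_iff, ← htop]
    apply Algebra.adjoin_mono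
    rw [Set.singleton_subset_iff, Polynomial.mem_rootSet]
    exact ⟨hf0, by simpa [hf, map_ofNat] using ht⟩
  have hnorm : Normal K L := Normal.of_isSplittingField f
  have hgal : IsGalois K L := ⟨⟩
  obtain ⟨σ, hσ⟩ : ∃ σ : Gal(L/K), σ ≠ 1 := by
    have hc : Nat.card Gal(L/K) = 3 := by rw [IsGalois.card_aut_eq_finrank, hfr]
    by_contra! h
    have : Subsingleton Gal(L/K) := ⟨fun a b => by rw [h a, h b]⟩
    rw [Nat.card_unique] at hc
    omega
  obtain ⟨h3, hall, h2, h1⟩ := h94_gal hfr σ hσ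
  have hinj : ∀ g : Gal(L/K), g t = t → g = 1 := by
    intro g hg
    have : (g : L →ₐ[K] L) = AlgHom.id K L := by
      apply AlgHom.ext_of_adjoin_eq_top htop
      intro x hx
      rw [Set.mem_singleton_iff.mp hx]
      exact hg
    ext x
    exact DFunLike.congr_fun this x
  have hσσ : ∀ x, σ (σ x) = (σ ^ 2) x := fun x => by rw [pow_two]; rfl
  have hab : t ≠ σ t := fun h => hσ (hinj σ h.symm)
  have hac : t ≠ σ (σ t) := fun h => h2 (hinj _ (by rw [← hσσ]; exact h.symm))
  have hbc : σ t ≠ σ (σ t) := fun h => hab (σ.injective h)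
  have hb : (σ t) ^ 3 - 3 * M * σ t - k = 0 := by
    have := congrArg σ ht
    simpa [map_ofNat] using this
  have hc : (σ (σ t)) ^ 3 - 3 * M * σ (σ t) - k = 0 := by
    have := congrArg σ hb
    simpa [map_ofNat] using this
  have q1 : t ^ 2 + t * σ t + σ t ^ 2 = 3 * M := by
    apply mul_left_cancel₀ (sub_ne_zero.mpr hab); linear_combination ht - hb
  have q2 : t ^ 2 + t * σ (σ t) + σ (σ t) ^ 2 = 3 * M := by
    apply mul_left_cancel₀ (sub_ne_zero.mpr hac); linear_combination ht - hc
  have e1 : t + σ t + σ (σ t) = 0 := by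
    apply mul_left_cancel₀ (sub_ne_zero.mpr hbc); linear_combination q1 - q2
  have hc' : σ (σ t) = - t - σ t := by linear_combination e1
  have e2 : t * σ t + t * σ (σ t) + σ t * σ (σ t) = - (3 * M) := by
    rw [hc']; linear_combination -q1
  have e3 : t * σ t * σ (σ t) = k := by
    rw [hc']; linear_combination (-t) * q1 + ht
  have hti : IsIntegral ℤ t := by
    refine ⟨Polynomial.X ^ 3 - Polynomial.C (3 * M) * Polynomial.X - Polynomial.C k, ?_, ?_⟩
    · monicity!
    · simp only [Polynomial.eval₂_sub, Polynomial.eval₂_mul, Polynomial.eval₂_pow, Polynomial.eval₂_X,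
        Polynomial.eval₂_C]
      simpa using ht
  set D : ℤ := 4 * M ^ 3 - k ^ 2 with hD
  have hDL : (D : L) = 4 * M ^ 3 - k ^ 2 := by rw [hD]; push_cast; ring
  obtain ⟨c, hcc⟩ : (9:ℤ) ∣ 1 - 3 * M - k := by omega
  have hccL : (1 - 3 * M - k : L) = 9 * c := by exact_mod_cast hcc
  set z : L := (t - 1) * s / 3 with hz
  have hzeq : z ^ 3 + (1 - M) * D * z = - s * (z ^ 2 + c * D) := by
    have hk' : (k : L) = 1 - 3 * M - 9 * c := by linear_combination -hccL
    have hs2' : s ^ 2 = 3 * D := by rw [hs2, hDL]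
    have hD' : (D : L) = s ^ 2 / 3 := by rw [hs2']; ring
    rw [hz, hD']
    linear_combination (s ^ 3 / 27) * ht + (s ^ 3 / 27) * hk'
  have hzi : IsIntegral ℤ z := by
    refine ⟨(Polynomial.X ^ 3 + Polynomial.C ((1 - M) * D) * Polynomial.X) ^ 2 -
      Polynomial.C (3 * D) * (Polynomial.X ^ 2 + Polynomial.C (c * D)) ^ 2, ?_, ?_⟩
    · monicity!
    · simp only [Polynomial.eval₂_sub, Polynomial.eval₂_add, Polynomial.eval₂_mul, Polynomial.eval₂_pow,
        Polynomial.eval₂_X, Polynomial.eval₂_C]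
      simp only [eq_intCast]
      push_cast
      rw [hzeq]
      linear_combination (z ^ 2 + c * D) ^ 2 * hs2 - 3 * (z ^ 2 + c * D) ^ 2 * hDL
  have hσs : σ s = s := σ.commutes S
  have hσz : σ z = (σ t - 1) * s / 3 := by rw [hz]; simp [hσs, map_ofNat]
  have hσσz : σ (σ z) = (σ (σ t) - 1) * s / 3 := by rw [hσz]; simp [hσs, map_ofNat]
  have ez : z * σ z + z * σ (σ z) + σ z * σ (σ z) = D * (1 - M) := by
    rw [hσσz, hσz, hz, hDL]
    linear_combination (s ^ 2 / 9) * e2 - (2 * s ^ 2 / 9) * e1 + ((1 - M) / 3) * hs2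
  let θ : 𝓞 L := ⟨t, hti⟩
  let ζ : 𝓞 L := ⟨z, hzi⟩
  have E1 : θ + σ • θ + σ • σ • θ = 0 := RingOfIntegers.ext e1
  have E2 : θ * σ • θ + θ * σ • σ • θ + σ • θ * σ • σ • θ = -(3 * (M : 𝓞 L)) := by
    apply RingOfIntegers.ext
    push_cast
    exact e2
  have E3 : θ * σ • θ * σ • σ • θ = (k : 𝓞 L) := by
    apply RingOfIntegers.ext
    push_cast
    exact e3
  have EZ : ζ * σ • ζ + ζ * σ • σ • ζ + σ • ζ * σ • σ • ζ = (D : 𝓞 L) * (1 - M) := by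
    apply RingOfIntegers.ext
    push_cast
    exact ez
  refine h94 hfr σ hσ hω ?_
  intro P hP hP0
  by_contra! hcon
  have hcon2 : ∀ x : 𝓞 L, σ • σ • x - x ∈ P := fun x => by
    have := P.add_mem (hcon (σ • x)) (hcon x)
    simpa using this
  have hone : (1 : 𝓞 L) ∉ P := fun h => hP.ne_top ((Ideal.eq_top_iff_one P).mpr h)
  have hq : ∀ x : 𝓞 L, Ideal.Quotient.mk P (σ • x) = Ideal.Quotient.mk P x := fun x =>
    Ideal.Quotient.eq.mpr (hcon x)
  have hE1 := congrArg (Ideal.Quotient.mk P) E1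
  have hE2 := congrArg (Ideal.Quotient.mk P) E2
  have hE3 := congrArg (Ideal.Quotient.mk P) E3
  have hEZ := congrArg (Ideal.Quotient.mk P) EZ
  simp only [map_add, map_mul, map_sub, map_neg, hq, map_zero, map_one, map_ofNat, map_intCast] at hE1 hE2 hE3 hEZ
  have hQ1 : (1 : 𝓞 L ⧸ P) ≠ 0 := by
    intro h
    exact hone (Ideal.Quotient.eq_zero_iff_mem.mp (by rw [map_one]; exact h))
  have : IsDomain (𝓞 L ⧸ P) := Ideal.Quotient.isDomain P
  generalize Ideal.Quotient.mk P θ = a at *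
  generalize Ideal.Quotient.mk P ζ = y at *
  by_cases h3P : (3 : 𝓞 L ⧸ P) = 0
  · obtain ⟨M', hM'⟩ := hM3
    obtain ⟨k', hk'⟩ := hk9
    have hMq : (M : 𝓞 L ⧸ P) = 0 := by rw [hM']; push_cast; rw [h3P, zero_mul]
    have hkq : (k : 𝓞 L ⧸ P) = 1 := by
      have : k = 3 * (3 * k') + 1 := by linarith
      rw [this]; push_cast; rw [h3P]; ring
    have hDq : (D : 𝓞 L ⧸ P) = -1 := by rw [hD]; push_cast; rw [hMq, hkq]; ring
    rw [hDq, hMq] at hEZ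
    apply hQ1
    linear_combination hEZ - y ^ 2 * h3P
  · have ha : a = 0 := by
      have : 3 * a = 0 := by linear_combination hE1
      exact (mul_eq_zero.mp this).resolve_left h3P
    rw [ha] at hE2 hE3
    have hMq : (M : 𝓞 L ⧸ P) = 0 := by
      have : 3 * (M : 𝓞 L ⧸ P) = 0 := by linear_combination hE2
      exact (mul_eq_zero.mp this).resolve_left h3P
    have hkq : (k : 𝓞 L ⧸ P) = 0 := by linear_combination -hE3
    obtain ⟨u, v, huv⟩ := hcop
    have := congrArg (Int.cast : ℤ → 𝓞 L ⧸ P) huv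
    push_cast at this
    rw [hMq, hkq] at this
    apply hQ1
    linear_combination -this

lemma cub_aeval (M k : ℤ) {K L : Type*} [Field K] [Field L] [Algebra K L] (x : L) :
    Polynomial.aeval x (Polynomial.X ^ 3 - Polynomial.C (3 * M : K) * Polynomial.X -
      Polynomial.C (k : K)) = x ^ 3 - 3 * (M : L) * x - (k : L) := by
  rw [map_sub, map_sub, map_mul, map_pow, Polynomial.aeval_X, Polynomial.aeval_C,
    Polynomial.aeval_C, map_mul, map_ofNat, map_intCast, map_intCast]

lemma cub_main (M k : ℤ) (hM : Odd M) (hk : Odd k) (hM3 : (3:ℤ) ∣ M) (hk9 : (9:ℤ) ∣ k - 1)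
    (hcop : IsCoprime M k) {K : Type*} [Field K] [NumberField K]
    (hdeg : Module.finrank ℚ K = 2) (S : K) (hS : S ^ 2 = 3 * (4 * M ^ 3 - k ^ 2)) :
    3 ∣ NumberField.classNumber K := by
  set D : ℤ := 4 * M ^ 3 - k ^ 2 with hD
  have hS' : S ^ 2 = 3 * (D : K) := by rw [hD]; push_cast; exact hS
  have hω := cub_omega D (by
      obtain ⟨a, ha⟩ := hM3
      obtain ⟨b, hb⟩ := hk9
      have hk' : k = 9 * b + 1 := by linarith
      rw [hD, ha, hk']; ring_nf; omega) (by
      obtain ⟨a, ha⟩ := hM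
      obtain ⟨b, hb⟩ := hk
      have e1 : M ^ 3 = 2 * (4 * a ^ 3 + 6 * a ^ 2 + 3 * a) + 1 := by rw [ha]; ring
      have e2 : k ^ 2 = 4 * (b * (b + 1)) + 1 := by rw [hb]; ring
      obtain ⟨c, hc⟩ := Int.even_mul_succ_self b
      rw [hD, e1, e2, hc]
      omega) hdeg S hS'
  set f : Polynomial K := Polynomial.X ^ 3 - Polynomial.C (3 * M : K) * Polynomial.X - Polynomial.C (k : K) with hf
  have hfi : Irreducible f := cub_irred M k hM hk hdeg
  have hfd : f.natDegree = 3 := by rw [hf]; compute_degree!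
  have hfm : f.Monic := by rw [hf]; monicity!
  have : Fact (Irreducible f) := ⟨hfi⟩
  let L := AdjoinRoot f
  have hfinK : Module.Finite K L := hfm.finite_adjoinRoot
  have hfr : Module.finrank K L = 3 := by
    rw [(AdjoinRoot.powerBasis hfi.ne_zero).finrank, AdjoinRoot.powerBasis_dim, hfd]
  have : NumberField L := NumberField.of_module_finite K L
  have hθ : (AdjoinRoot.root f) ^ 3 - 3 * (M : L) * AdjoinRoot.root f - (k : L) = 0 := by
    have h : Polynomial.aeval (AdjoinRoot.root f) f = 0 := by
      rw [Polynomial.aeval_def]; exact AdjoinRoot.eval₂_root f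
    exact (cub_aeval M k (AdjoinRoot.root f)).symm.trans h
  have hmin : minpoly K (AdjoinRoot.root f) = f := by
    rw [AdjoinRoot.minpoly_root hfi.ne_zero, hfm.leadingCoeff]; simp
  refine cub_core M k hM3 hk9 hcop hω hfr S hS (AdjoinRoot.root f : L) hθ ?_ AdjoinRoot.adjoinRoot_eq_top
  intro h0
  have hdvd := minpoly.dvd K (AdjoinRoot.root f) (p := Polynomial.X ^ 2 - Polynomial.C (M : K)) (by
    rw [map_sub, map_pow, Polynomial.aeval_X, Polynomial.aeval_C, map_intCast]
    exact h0)
  have hd2 : (Polynomial.X ^ 2 - Polynomial.C (M : K)).natDegree = 2 := by compute_degree!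
  have := Polynomial.natDegree_le_of_dvd hdvd (by intro h; rw [h] at hd2; simp at hd2)
  rw [hmin, hfd, hd2] at this
  omega



/-- Let `m` and `n` be positive integers with `m` odd and `m ≡ 0 (mod 3)`, and let `k` be an
integer with `k ≡ ±1 (mod 18)` and `gcd(m, k) = 1`.  If `d₁` is the squarefree part of
`3 * (4 * m ^ (3 * n) - k ^ 2)`, then `3` divides the class number of `ℚ(√d₁)`. -/
theorem class_number_div_three_of_sqrt_sqfree_part_three_mul_four_pow_sub_sq
    (m n : ℕ) (hm : 0 < m) (hn : 0 < n) (hmodd : Odd m) (hm3 : 3 ∣ m)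
    (k : ℤ) (hk : k ≡ 1 [ZMOD 18] ∨ k ≡ -1 [ZMOD 18]) (hgcd : Int.gcd (m : ℤ) k = 1)
    (d₁ : ℤ) (hsf : Squarefree d₁) (t : ℤ) (ht : 0 < t)
    (hpart : 3 * (4 * (m : ℤ) ^ (3 * n) - k ^ 2) = t ^ 2 * d₁)
    (K : Type*) [Field K] [NumberField K] (hdeg : Module.finrank ℚ K = 2)
    (hsqrt : ∃ α : K, α ^ 2 = (d₁ : K)) :
    3 ∣ NumberField.classNumber K := by
  obtain ⟨α, hα⟩ := hsqrt
  have hn0 : n ≠ 0 := hn.ne'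
  have hS : ((t : K) * α) ^ 2 = 3 * (4 * (((m : ℤ) ^ n : ℤ) : K) ^ 3 - (k : K) ^ 2) := by
    have h := congrArg (Int.cast : ℤ → K) hpart
    push_cast at h ⊢
    rw [mul_pow, hα, ← h, ← pow_mul, mul_comm n 3]
  have hM : Odd ((m : ℤ) ^ n) := by
    apply Odd.pow
    exact_mod_cast hmodd
  have hM3 : (3 : ℤ) ∣ (m : ℤ) ^ n := dvd_pow (by exact_mod_cast hm3) hn0
  have hcop : IsCoprime ((m : ℤ) ^ n) k := (Int.isCoprime_iff_gcd_eq_one.mpr hgcd).pow_left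
  rcases hk with hk | hk
  · have h18 : (18 : ℤ) ∣ 1 - k := hk.dvd
    exact cub_main _ k hM (by rw [Int.odd_iff]; omega) hM3 (by omega) hcop hdeg _ hS
  · have h18 : (18 : ℤ) ∣ -1 - k := hk.dvd
    refine cub_main _ (-k) hM (by rw [Int.odd_iff]; omega) hM3 (by omega) hcop.neg_right hdeg
      ((t : K) * α) ?_
    rw [hS]; push_cast; ring
end

section
/- Let m and n be odd positive integers with m ≡ 0 (mod 3) and with 3 dividing n exactly once (that is, 3 ∣ n and 9 ∤ n). Then 3 divides the class number of the quadratic field ℚ(√(−(m²n² + 4n)/3)). -/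
section Abs
variable {R S : Type*} [CommRing R] [CommRing S] [Algebra R S]

theorem h94_key (s : S ≃ₐ[R] S) (hs : ∀ x, s (s (s x)) = x)
    (hI : Ideal.span (Set.range fun x : S => x - s x) = ⊤)
    (J J' : Ideal S) (q v : S) (h : ∀ j ∈ J, j + q * s j + v * s (s j) ∈ J') :
    J ≤ J' := by
  have h1 : ∀ c ∈ Ideal.span (Set.range fun x : S => x - s x),
      ∃ r, ∀ j ∈ J, c * j + r * s (s j) ∈ J' := by
    intro c hc
    induction hc using Submodule.span_induction with
    | mem x hx =>
      obtain ⟨y, rfl⟩ := hx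
      refine ⟨v * (s (s y) - s y), fun j hj => ?_⟩
      have a := h (y * j) (J.mul_mem_left _ hj)
      have b := J'.mul_mem_left (s y) (h j hj)
      have := J'.sub_mem a b
      convert this using 1
      simp only [map_mul]; ring
    | zero => exact ⟨0, fun j hj => by simp⟩
    | add x y _ _ hx hy =>
      obtain ⟨r, hr⟩ := hx
      obtain ⟨r', hr'⟩ := hy
      refine ⟨r + r', fun j hj => ?_⟩
      convert J'.add_mem (hr j hj) (hr' j hj) using 1
      ring
    | smul a x _ hx =>
      obtain ⟨r, hr⟩ := hx
      refine ⟨a * r, fun j hj => ?_⟩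
      convert J'.mul_mem_left a (hr j hj) using 1
      simp only [smul_eq_mul]; ring
  obtain ⟨r, hr⟩ := h1 1 (by rw [hI]; trivial)
  intro j hj
  have h2 : ∀ c ∈ Ideal.span (Set.range fun x : S => x - s x), c * j ∈ J' := by
    intro c hc
    induction hc using Submodule.span_induction with
    | mem x hx =>
      obtain ⟨y, rfl⟩ := hx
      have a := hr (s y * j) (J.mul_mem_left _ hj)
      have b := J'.mul_mem_left y (hr j hj)
      convert J'.sub_mem b a using 1
      simp only [map_mul, hs]; ring
    | zero => simp
    | add x y _ _ hx hy => rw [add_mul]; exact J'.add_mem hx hy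
    | smul a x _ hx => rw [smul_eq_mul, mul_assoc]; exact J'.mul_mem_left a hx
  simpa using h2 1 (by rw [hI]; trivial)

theorem h94_descent_s1 (s : S ≃ₐ[R] S) (hs : ∀ x, s (s (s x)) = x)
    (hfix : ∀ x, s x = x → ∃ r, algebraMap R S r = x)
    (hI : Ideal.span (Set.range fun x : S => x - s x) = ⊤)
    (J : Ideal S) (hJ : ∀ x ∈ J, s x ∈ J) :
    (J.comap (algebraMap R S)).map (algebraMap R S) = J := by
  refine le_antisymm Ideal.map_comap_le (h94_key s hs hI J _ 1 1 ?_)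
  intro j hj
  obtain ⟨r, hr⟩ := hfix (j + 1 * s j + 1 * s (s j)) (by simp [hs]; ring)
  rw [← hr]
  apply Ideal.mem_map_of_mem
  rw [Ideal.mem_comap, hr]
  simpa using J.add_mem (J.add_mem hj (hJ _ hj)) (hJ _ (hJ _ hj))

theorem h94_90 [Nontrivial S] (s : S ≃ₐ[R] S) (hs : ∀ x, s (s (s x)) = x)
    (hI : Ideal.span (Set.range fun x : S => x - s x) = ⊤)
    (u : S) (hu : u * s u * s (s u) = 1) : ∃ a : S, a ≠ 0 ∧ u * s a = a := by
  by_contra! hcon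
  have := h94_key s hs hI ⊤ ⊥ u (u * s u) (fun t _ => by
    by_contra hne
    refine hcon _ hne ?_
    simp only [map_add, map_mul, hs]
    linear_combination t * hu)
  exact bot_ne_top (le_antisymm bot_le this)

theorem h94_units_s1 [IsDomain S] [IsDedekindDomain R] [Module.FaithfullyFlat R S]
    [Fintype (ClassGroup R)]
    (s : S ≃ₐ[R] S) (hs : ∀ x, s (s (s x)) = x)
    (hfix : ∀ x, s x = x → ∃ r, algebraMap R S r = x)
    (hI : Ideal.span (Set.range fun x : S => x - s x) = ⊤)
    (hcl : ¬ 3 ∣ Fintype.card (ClassGroup R))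
    (u : S) (hu : u * s u * s (s u) = 1) : ∃ v : Sˣ, u * s v = v := by
  obtain ⟨a, ha, hua⟩ := h94_90 s hs hI u hu
  have hinj : Function.Injective (algebraMap R S) := FaithfulSMul.algebraMap_injective R S
  have husa : s a = s u * s (s u) * a := by linear_combination (- s a) * hu + s u * s (s u) * hua
  have hd := h94_descent_s1 s hs hfix hI (Ideal.span {a}) (by
    intro x hx
    obtain ⟨c, rfl⟩ := Ideal.mem_span_singleton'.1 hx
    refine Ideal.mem_span_singleton'.2 ⟨s c * (s u * s (s u)), ?_⟩
    rw [map_mul, husa]; ring)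
  set A := (Ideal.span {a}).comap (algebraMap R S) with hA
  obtain ⟨r, hr⟩ := hfix (a * s a * s (s a)) (by simp only [map_mul, hs]; ring)
  have hA0 : A ≠ ⊥ := by
    intro h
    rw [h, Ideal.map_bot] at hd
    exact ha (Ideal.span_singleton_eq_bot.1 hd.symm)
  have hA3 : A ^ 3 = Ideal.span {r} := by
    have : (A ^ 3).map (algebraMap R S) = (Ideal.span {r}).map (algebraMap R S) := by
      rw [Ideal.map_pow, hd, Ideal.map_span, Set.image_singleton, hr, Ideal.span_singleton_pow,
        Ideal.span_singleton_eq_span_singleton]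
      have hss : s (s a) = s (s u) * u * s a := by
        conv_lhs => rw [husa]
        simp only [map_mul, hs]
      have hUu : IsUnit u := IsUnit.of_mul_eq_one (s u * s (s u)) (by rw [← hu]; ring)
      have hUsu : IsUnit (s u) := hUu.map s
      have hUssu : IsUnit (s (s u)) := hUsu.map s
      refine ⟨((hUsu.mul hUssu).mul ((hUssu.mul hUu).mul (hUsu.mul hUssu))).unit, ?_⟩
      rw [IsUnit.unit_spec, hss, husa]; ring
    rw [← Ideal.comap_map_eq_self_of_faithfullyFlat (B := S) (A ^ 3), this,
      Ideal.comap_map_eq_self_of_faithfullyFlat]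
  have hAm : A ∈ nonZeroDivisors (Ideal R) := mem_nonZeroDivisors_of_ne_zero hA0
  have hprin : A.IsPrincipal := by
    rw [← ClassGroup.mk0_eq_one_iff hAm]
    have h3 : (ClassGroup.mk0 ⟨A, hAm⟩) ^ 3 = 1 := by
      rw [← map_pow]
      have : (⟨A, hAm⟩ : nonZeroDivisors (Ideal R)) ^ 3 = ⟨A ^ 3, pow_mem hAm 3⟩ := rfl
      rw [this, ClassGroup.mk0_eq_one_iff, hA3]
      exact ⟨⟨r, rfl⟩⟩
    have hc : (ClassGroup.mk0 ⟨A, hAm⟩) ^ Fintype.card (ClassGroup R) = 1 := pow_card_eq_one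
    have hcop : Nat.Coprime 3 (Fintype.card (ClassGroup R)) :=
      (Nat.Prime.coprime_iff_not_dvd Nat.prime_three).2 hcl
    have := pow_gcd_eq_one.2 ⟨h3, hc⟩
    rwa [hcop, pow_one] at this
  obtain ⟨⟨b, hb⟩⟩ := hprin
  rw [hb, Ideal.submodule_span_eq, Ideal.map_span, Set.image_singleton,
    Ideal.span_singleton_eq_span_singleton] at hd
  obtain ⟨w, hw⟩ := hd
  refine ⟨w, ?_⟩
  have hb0 : algebraMap R S b ≠ 0 := by
    intro h; rw [h, zero_mul] at hw; exact ha hw.symm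
  apply mul_left_cancel₀ hb0
  rw [hw]
  rw [← hw, map_mul, AlgEquiv.commutes] at hua
  rw [← hw]
  linear_combination hua

/-- the norm unit -/
theorem h94_norm_s1 [FaithfulSMul R S]
    (s : S ≃ₐ[R] S) (hs : ∀ x, s (s (s x)) = x)
    (hfix : ∀ x, s x = x → ∃ r, algebraMap R S r = x) (v : Sˣ) :
    ∃ z : Rˣ, algebraMap R S z = v * s v * s (s v) := by
  have hinj : Function.Injective (algebraMap R S) := FaithfulSMul.algebraMap_injective R S
  obtain ⟨r, hr⟩ := hfix (v * s v * s (s v)) (by simp only [map_mul, hs]; ring)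
  obtain ⟨r', hr'⟩ := hfix ((v⁻¹ : Sˣ) * s (v⁻¹ : Sˣ) * s (s (v⁻¹ : Sˣ)))
    (by simp only [map_mul, hs]; ring)
  have hv : (v : S) * (v⁻¹ : Sˣ) = 1 := v.mul_inv
  have hv1 : s (v : S) * s (v⁻¹ : Sˣ) = 1 := by rw [← map_mul, hv, map_one]
  have hv2 : s (s (v : S)) * s (s (v⁻¹ : Sˣ)) = 1 := by rw [← map_mul, hv1, map_one]
  have : r * r' = 1 := by
    apply hinj
    rw [map_mul, hr, hr', map_one]
    calc _ = ((v : S) * (v⁻¹ : Sˣ)) * (s (v : S) * s (v⁻¹ : Sˣ)) *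
        (s (s (v : S)) * s (s (v⁻¹ : Sˣ))) := by ring
      _ = 1 := by rw [hv, hv1, hv2]; simp
  exact ⟨⟨r, r', this, by rw [mul_comm]; exact this⟩, hr⟩

theorem h94_main [IsDomain S] [IsDedekindDomain R] [Module.FaithfullyFlat R S]
    [Fintype (ClassGroup R)]
    (s : S ≃ₐ[R] S) (hs : ∀ x, s (s (s x)) = x)
    (hfix : ∀ x, s x = x → ∃ r, algebraMap R S r = x)
    (hI : Ideal.span (Set.range fun x : S => x - s x) = ⊤)
    [Finite Rˣ] (h3 : ∀ z : Rˣ, z ^ 3 = 1 → z = 1)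
    [Module.Finite ℤ (Additive Sˣ)] (e₀ : Sˣ) (he₀ : ∀ n : ℤ, n ≠ 0 → e₀ ^ n ≠ 1) :
    3 ∣ Fintype.card (ClassGroup R) := by
  by_contra hcl
  let σ : Sˣ →* Sˣ := Units.map (s : S →* S)
  let ν : Sˣ →* Sˣ := MonoidHom.mk' (fun v => v * σ v * σ (σ v)) (by
    intro a b; simp only [map_mul]; exact Units.ext (by push_cast; ring))
  have hσ : ∀ v, σ (σ (σ v)) = v := fun v => Units.ext (hs v)
  let i : Rˣ →* Sˣ := Units.map (algebraMap R S : R →* S)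
  have hσi : ∀ z, σ (i z) = i z := fun z => Units.ext (s.commutes _)
  have hcube : Function.Surjective (fun z : Rˣ => z ^ 3) := by
    apply Finite.surjective_of_injective
    intro a b hab
    have := h3 (a / b) (by rw [div_pow, div_eq_one]; exact hab)
    exact div_eq_one.1 this
  have hnorm : ∀ v, ∃ z, i z = ν v := fun v => by
    obtain ⟨z, hz⟩ := h94_norm_s1 s hs hfix v
    exact ⟨z, Units.ext hz⟩
  -- every norm one unit is v / σ v with v norm one
  have hdiv : ∀ u, ν u = 1 → ∃ v, ν v = 1 ∧ u * σ v = v := by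
    intro u hu
    obtain ⟨v, hv⟩ := h94_units_s1 s hs hfix hI hcl u (congrArg Units.val hu)
    obtain ⟨z, hz⟩ := hnorm v
    obtain ⟨y, rfl⟩ := hcube z
    refine ⟨v * (i y)⁻¹, ?_, ?_⟩
    · rw [map_mul, ← hz, map_inv]
      change i (y ^ 3) * (i y * σ (i y) * σ (σ (i y)))⁻¹ = 1
      simp only [hσi, map_pow]
      rw [mul_inv_eq_one, pow_succ, pow_two]
    · rw [map_mul, map_inv, hσi, ← mul_assoc]
      congr 1
      exact Units.ext hv
  let N : Submodule ℤ (Additive Sˣ) := AddSubgroup.toIntSubmodule (Subgroup.toAddSubgroup ν.ker)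
  have hNmem : ∀ u : Sˣ, Additive.ofMul u ∈ N ↔ ν u = 1 := fun u => Iff.rfl
  obtain ⟨r, hr, hr0⟩ := Submodule.exists_sub_one_mem_and_smul_eq_zero_of_fg_of_le_smul
    (Ideal.span {(3 : ℤ)}) N (IsNoetherian.noetherian N) (by
      intro x hx
      obtain ⟨u, rfl⟩ := Additive.ofMul.surjective x
      obtain ⟨v, hv, huv⟩ := hdiv u hx
      obtain ⟨w, hw, hvw⟩ := hdiv v hv
      have key : u = ((σ w)⁻¹) ^ 3 := by
        have hw' : w * σ w * σ (σ w) = 1 := hw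
        have h1 : σ v * σ (σ w) = σ w := by rw [← map_mul, hvw]
        have e1 : u = v * (σ v)⁻¹ := eq_mul_inv_of_mul_eq huv
        have e2 : v = w * (σ w)⁻¹ := eq_mul_inv_of_mul_eq hvw
        have e3 : σ v = σ w * (σ (σ w))⁻¹ := eq_mul_inv_of_mul_eq h1
        rw [e1, e3, e2]
        have e4 : σ (σ w) = (w * σ w)⁻¹ := eq_inv_of_mul_eq_one_right hw'
        rw [e4]
        generalize σ w = t
        rw [pow_succ, pow_two]
        simp only [mul_inv, inv_inv]
        calc _ = (w * w⁻¹) * (t⁻¹ * t⁻¹ * t⁻¹) := by ac_rfl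
          _ = _ := by simp
      rw [key, ofMul_pow, ← natCast_zsmul]
      refine Submodule.smul_mem_smul (Ideal.mem_span_singleton_self _) ?_
      rw [hNmem, map_inv]
      have : ν (σ w) = 1 := by
        change σ w * σ (σ w) * σ (σ (σ w)) = 1
        rw [← map_mul, ← map_mul]
        change σ (ν w) = 1
        rw [hw, map_one]
      rw [this, inv_one])
  obtain ⟨z, hz⟩ := hnorm e₀
  have hz1 : z ^ Nat.card Rˣ = 1 := pow_card_eq_one'
  have hm : ν (e₀ ^ Nat.card Rˣ) = 1 := by
    rw [map_pow, ← hz, ← map_pow, hz1, map_one]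
  have := hr0 _ ((hNmem _).2 hm)
  have h5 : e₀ ^ ((Nat.card Rˣ : ℤ) * r) = 1 := by
    rw [zpow_mul, zpow_natCast]
    exact this
  refine he₀ _ (mul_ne_zero (by exact_mod_cast Nat.card_pos.ne') ?_) h5
  rintro rfl
  rw [Ideal.mem_span_singleton] at hr
  omega
end Abs

open Polynomial in
theorem h94_adj.{u} (K : Type u) [Field K] (p q : K)
    (hirr : Irreducible (X ^ 3 + C p * X + C q : K[X])) :
    ∃ (L : Type u) (_ : Field L) (_ : Algebra K L) (_ : FiniteDimensional K L),
      Module.finrank K L = 3 ∧ ∃ w : L,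
        w ^ 3 + algebraMap K L p * w + algebraMap K L q = 0 ∧
        (∀ x, x ^ 3 + algebraMap K L p * x + algebraMap K L q = 0 → ∃ f : L →ₐ[K] L, f w = x) ∧
        (∀ f f' : L →ₐ[K] L, f w = f' w → f = f') := by
  obtain ⟨g, hg⟩ : ∃ g : K[X], g = X ^ 3 + C p * X + C q := ⟨_, rfl⟩
  rw [← hg] at hirr
  have hdeg : g.natDegree = 3 := by rw [hg]; compute_degree!
  have hg0 : g ≠ 0 := hirr.ne_zero
  have : Fact (Irreducible g) := ⟨hirr⟩
  have hev : ∀ (M : Type u) [Field M] (φ : K →+* M) (x : M),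
      eval₂ φ x g = x ^ 3 + φ p * x + φ q := by
    intro M _ φ x
    rw [hg]; simp
  refine ⟨AdjoinRoot g, inferInstance, inferInstance, (AdjoinRoot.powerBasis hg0).finite, ?_,
    AdjoinRoot.root g, ?_, ?_, ?_⟩
  · rw [(AdjoinRoot.powerBasis hg0).finrank]; simp [hdeg]
  · have := AdjoinRoot.eval₂_root g
    rw [hev] at this
    exact this
  · intro x hx
    refine ⟨AdjoinRoot.liftAlgHom g (Algebra.ofId K _) x ?_, AdjoinRoot.liftAlgHom_root ..⟩
    change eval₂ (algebraMap K _) x g = 0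
    rw [hev]
    exact hx
  · intro f f' h
    exact AdjoinRoot.algHom_ext h

open Polynomial in
theorem h94_ext.{u} (K : Type u) [Field K] [CharZero K] (k l β : K) (hk : k ≠ 0) (hl : l ≠ 0)
    (hβ : β ^ 2 * (27 * l ^ 2 * k ^ 2 + 4 * k) = -1)
    (hirr : Irreducible (X ^ 3 + C k * X + C (l * k ^ 2) : K[X])) :
    ∃ (L : Type u) (_ : Field L) (_ : Algebra K L) (_ : FiniteDimensional K L),
      Module.finrank K L = 3 ∧ ∃ (s : L ≃ₐ[K] L) (w : L),
        w ^ 3 + algebraMap K L k * w + algebraMap K L (l * k ^ 2) = 0 ∧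
        (∀ x, s (s (s x)) = x) ∧ w + s w + s (s w) = 0 ∧
        w ^ 2 + s w ^ 2 + s (s w) ^ 2 = - 2 * algebraMap K L k ∧
        (∀ x, s x = x → ∃ r, algebraMap K L r = x) := by
  obtain ⟨L, _, _, hfd, hfr, w, hw0, hlift, hext⟩ := h94_adj K k (l * k ^ 2) hirr
  let k' : L := algebraMap K L k
  let l' : L := algebraMap K L l
  let b : L := algebraMap K L β
  have hw : w ^ 3 + k' * w + l' * k' ^ 2 = 0 := by simpa [k', l'] using hw0
  have hb : b ^ 2 * (27 * l' ^ 2 * k' ^ 2 + 4 * k') = -1 := by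
    have := congrArg (algebraMap K L) hβ
    simpa only [map_mul, map_pow, map_add, map_neg, map_one, map_ofNat] using this
  have : CharZero L := charZero_of_injective_algebraMap (algebraMap K L).injective
  let P : L → L := fun x => (- x + b * (-6 * x ^ 2 + 9 * l' * k' * x - 4 * k')) / 2
  obtain ⟨w2, hw2⟩ : ∃ w2, w2 = P w := ⟨_, rfl⟩
  have hw2' : 2 * w2 = - w + b * (-6 * w ^ 2 + 9 * l' * k' * w - 4 * k') := by
    rw [hw2]; simp only [P]; field_simp
  have hQ : (b * (-6 * w ^ 2 + 9 * l' * k' * w - 4 * k')) ^ 2 = -3 * w ^ 2 - 4 * k' := by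
    linear_combination b ^ 2 * (36 * w - 108 * l' * k') * hw + (3 * w ^ 2 + 4 * k') * hb
  have h2 : w2 ^ 2 + w * w2 + w ^ 2 + k' = 0 := by
    have : (4 : L) * (w2 ^ 2 + w * w2 + w ^ 2 + k') = 0 := by
      linear_combination (2 * w2 + w + b * (-6 * w ^ 2 + 9 * l' * k' * w - 4 * k')) * hw2' + hQ
    simpa using this
  have hroot : w2 ^ 3 + k' * w2 + l' * k' ^ 2 = 0 := by
    linear_combination hw + (w2 - w) * h2
  have hP2 : P w2 = - w - w2 := by
    have : (2 : L) * P w2 = 2 * (- w - w2) := by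
      have : 2 * P w2 = - w2 + b * (-6 * w2 ^ 2 + 9 * l' * k' * w2 - 4 * k') := by
        simp only [P]; field_simp
      rw [this]
      have h3 : b ^ 2 * (-6 * w ^ 2 + 9 * l' * k' * w - 4 * k') * (6 * w + 9 * l' * k')
          = -3 * w := by
        linear_combination - 36 * b ^ 2 * hw + 3 * w * hb
      linear_combination -6 * b * h2 + (1/2 + b * (6 * w + 9 * l' * k') / 2) * hw2' + h3 / 2
    exact mul_left_cancel₀ two_ne_zero this
  obtain ⟨f, hfw⟩ := hlift w2 (by simpa [k', l'] using hroot)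
  have hfw2 : f w2 = - w - w2 := by
    rw [← hP2]
    conv_lhs => rw [hw2]
    simp only [P, map_div₀, map_add, map_neg, map_mul, map_sub, map_pow, hfw, k', l', b,
      AlgHom.commutes, map_ofNat]
  have hf3 : (f.comp f).comp f = AlgHom.id K L := by
    apply hext
    change f (f (f w)) = w
    rw [hfw, hfw2, map_sub, map_neg, hfw, hfw2]; ring
  have hf3' : ∀ x, f (f (f x)) = x := fun x => DFunLike.congr_fun hf3 x
  let s : L ≃ₐ[K] L := AlgEquiv.ofAlgHom f (f.comp f) hf3 hf3
  have hs : ∀ x, s x = f x := fun x => rfl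
  refine ⟨L, _, _, hfd, hfr, s, w, ?_, ?_, ?_, ?_, ?_⟩
  · simpa [k', l'] using hw
  · simpa only [hs] using hf3'
  · simp only [hs, hfw, hfw2]; ring
  · simp only [hs, hfw, hfw2]
    linear_combination 2 * h2
  · have hs3 : s ^ 3 = 1 := by
      ext x; exact hf3' x
    have hs1 : s ≠ 1 := by
      intro h
      have h1 : w2 = w := by
        have := DFunLike.congr_fun h w
        rwa [hs, hfw] at this
      have h5 : - w - w2 = w := by rw [← hfw2, h1, hfw, h1]
      have : (3 : L) * w = 0 := by linear_combination -h5 - h1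
      have hw0 : w = 0 := by simpa using this
      rw [hw0] at hw
      have : l' * k' ^ 2 = 0 := by linear_combination hw
      simp [l', k', hk, hl] at this
    have hord : orderOf s = 3 := orderOf_eq_prime hs3 hs1
    let H := IntermediateField.fixedField (Subgroup.zpowers s)
    have h6 : Module.finrank H L = 3 := by
      rw [IntermediateField.finrank_fixedField_eq_card, Nat.card_zpowers, hord]
    have h7 : H = ⊥ := by
      rw [← IntermediateField.finrank_eq_one_iff]
      have := Module.finrank_mul_finrank K H L
      rw [h6, hfr] at this
      omega
    intro x hx
    have : x ∈ H := by
      rintro ⟨t, ht⟩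
      obtain ⟨n, rfl⟩ := Subgroup.mem_zpowers_iff.1 ht
      have : s ∈ MulAction.stabilizer (L ≃ₐ[K] L) x := hx
      exact Subgroup.zpow_mem _ this n
    rw [h7] at this
    exact IntermediateField.mem_bot.1 this

section NF

open NumberField

theorem h94_unit_inf (L : Type*) [Field L] [NumberField L] (h : 3 ≤ Module.finrank ℚ L) :
    ∃ e : (𝓞 L)ˣ, ∀ n : ℤ, n ≠ 0 → e ^ n ≠ 1 := by
  have h1 := InfinitePlace.card_add_two_mul_card_eq_rank L
  have h2 := InfinitePlace.card_eq_nrRealPlaces_add_nrComplexPlaces L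
  have h3 : 0 < Units.rank L := by
    unfold Units.rank; omega
  by_contra! hcon
  have h4 := Units.finrank_eq L
  rw [Module.finrank_eq_zero_iff.2 (fun x => ?_)] at h4
  · omega
  · obtain ⟨n, hn, hx⟩ := hcon x.toMul
    exact ⟨n, hn, hx⟩

theorem h94_unit_fin (K : Type*) [Field K] [NumberField K] (h : Module.finrank ℚ K = 2)
    (hc : IsTotallyComplex K) : Finite (𝓞 K)ˣ := by
  have h1 := InfinitePlace.card_add_two_mul_card_eq_rank K
  have h2 := InfinitePlace.card_eq_nrRealPlaces_add_nrComplexPlaces K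
  have h0 := IsTotallyComplex.nrRealPlaces_eq_zero (K := K)
  have h3 : Units.rank K = 0 := by
    unfold Units.rank; omega
  have : Units.torsion K = ⊤ := by
    have h4 := Units.closure_fundSystem_sup_torsion_eq_top K
    have : IsEmpty (Fin (Units.rank K)) := by rw [h3]; infer_instance
    rwa [Set.range_eq_empty, Subgroup.closure_empty, bot_sup_eq] at h4
  have h5 : Finite (⊤ : Subgroup (𝓞 K)ˣ) := by rw [← this]; infer_instance
  exact Finite.of_equiv _ (Subgroup.topEquiv (G := (𝓞 K)ˣ)).toEquiv

theorem h94_tc (K : Type*) [Field K] [NumberField K] (α : K) (E : ℤ) (hE : 0 < E)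
    (hα : α ^ 2 = -(E : K)) : IsTotallyComplex K := by
  refine ⟨fun v => ?_⟩
  rw [← InfinitePlace.not_isReal_iff_isComplex]
  intro hv
  have := congrArg (InfinitePlace.embedding_of_isReal hv) hα
  simp only [map_pow, map_neg, map_intCast] at this
  have h2 : (0 : ℝ) < E := by exact_mod_cast hE
  nlinarith [sq_nonneg (InfinitePlace.embedding_of_isReal hv α)]

open Polynomial in
theorem h94_irr (K : Type*) [Field K] [NumberField K] (h : Module.finrank ℚ K = 2)
    (k l : ℤ) (hk : Odd k) (hl : Odd l) :
    Irreducible (X ^ 3 + C (k : K) * X + C ((l : K) * (k : K) ^ 2) : K[X]) := by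
  let gZ : ℤ[X] := X ^ 3 + C k * X + C (l * k ^ 2)
  have hZd : gZ.natDegree = 3 := by simp only [gZ]; compute_degree!
  have hZm : gZ.Monic := by simp only [gZ]; monicity!
  let gQ : ℚ[X] := gZ.map (algebraMap ℤ ℚ)
  have hQd : gQ.natDegree = 3 := by rw [hZm.natDegree_map, hZd]
  have hQm : gQ.Monic := hZm.map _
  have hQ : Irreducible gQ := by
    rw [Polynomial.irreducible_iff_roots_eq_zero_of_degree_le_three (by omega) (by omega),
      Multiset.eq_zero_iff_forall_notMem]
    intro x hx
    have hx' : aeval x gZ = 0 := by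
      have := (mem_roots'.1 hx).2
      rw [IsRoot, eval_map_algebraMap] at this
      exact this
    obtain ⟨r, rfl⟩ := isInteger_of_is_root_of_monic hZm hx'
    rw [aeval_algebraMap_apply, ← map_zero (algebraMap ℤ ℚ)] at hx'
    have h0 := (algebraMap ℤ ℚ).injective_int hx'
    simp [gZ] at h0
    have ho : Odd (l * k ^ 2) := hl.mul hk.pow
    have : Even (r ^ 3 + k * r) := by
      rcases Int.even_or_odd r with hr | hr
      · exact (hr.pow_of_ne_zero (by norm_num)).add (hr.mul_left k)
      · exact (hr.pow).add_odd (hk.mul hr)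
    have h9 := this.add_odd ho
    rw [h0] at h9
    simp at h9
  have hm : (X ^ 3 + C (k : K) * X + C ((l : K) * (k : K) ^ 2) : K[X]) =
      gQ.map (algebraMap ℚ K) := by
    simp [gQ, gZ]
  rw [hm]
  have hKd : (gQ.map (algebraMap ℚ K)).natDegree = 3 := by rw [natDegree_map, hQd]
  rw [Polynomial.irreducible_iff_roots_eq_zero_of_degree_le_three (by omega) (by omega),
      Multiset.eq_zero_iff_forall_notMem]
  intro x hx
  have hx' : aeval x gQ = 0 := by
    have := (mem_roots'.1 hx).2
    rw [IsRoot, eval_map_algebraMap] at this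
    exact this
  have := minpoly.degree_dvd (K := ℚ) (x := x) (Algebra.IsIntegral.isIntegral x)
  rw [← minpoly.eq_of_irreducible_of_monic hQ hx' hQm, hQd, h] at this
  omega

theorem h94_no3 (K : Type*) [Field K] [NumberField K] (h : Module.finrank ℚ K = 2)
    (α : K) (E : ℤ) (hE : 0 < E) (h3 : ¬ 3 ∣ E)
    (hα : α ^ 2 = -(E : K)) (z : (𝓞 K)ˣ) (hz : z ^ 3 = 1) : z = 1 := by
  by_contra hne
  have hz' : ((z : 𝓞 K) : K) ^ 3 = 1 := by
    have := congrArg (fun u : (𝓞 K)ˣ => ((u : 𝓞 K) : K)) hz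
    simpa using this
  have hne' : ((z : 𝓞 K) : K) ≠ 1 := by
    intro h
    apply hne
    apply Units.ext
    apply RingOfIntegers.ext
    simpa using h
  obtain ⟨x, hx⟩ : ∃ x, x = ((z : 𝓞 K) : K) := ⟨_, rfl⟩
  rw [← hx] at hz' hne'
  have hq : x ^ 2 + x + 1 = 0 := by
    apply mul_left_cancel₀ (sub_ne_zero.2 hne')
    linear_combination hz'
  have hsq : (2 * x + 1) ^ 2 = -3 := by linear_combination 4 * hq
  -- α is not rational
  have hαQ : ∀ q : ℚ, algebraMap ℚ K q ≠ α := by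
    intro q hq
    have : algebraMap ℚ K (q ^ 2) = algebraMap ℚ K (-(E : ℚ)) := by
      rw [map_pow, hq, hα]; simp
    have := (algebraMap ℚ K).injective this
    have hE' : (0 : ℚ) < E := by exact_mod_cast hE
    nlinarith [sq_nonneg q]
  have hind : LinearIndependent ℚ ![1, α] := by
    rw [LinearIndependent.pair_iff]
    intro a b hab
    have hb : b = 0 := by
      by_contra hb
      refine hαQ (-a / b) ?_
      have : (algebraMap ℚ K b) ≠ 0 := by simpa using hb
      rw [map_div₀, map_neg, div_eq_iff this]
      simp only [Algebra.smul_def] at hab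
      linear_combination -hab
    subst hb
    simp at hab
    exact ⟨hab, rfl⟩
  have hspan := hind.span_eq_top_of_card_eq_finrank (by simp [h])
  have hmem : 2 * x + 1 ∈ Submodule.span ℚ (Set.range ![1, α]) := by rw [hspan]; trivial
  simp only [Matrix.range_cons, Matrix.range_empty, Set.union_empty, Set.singleton_union,
    Submodule.mem_span_pair] at hmem
  obtain ⟨a, b, hab⟩ := hmem
  rw [← hab] at hsq
  simp only [Algebra.smul_def, mul_one] at hsq
  have hrel : algebraMap ℚ K (2 * a * b) * α = algebraMap ℚ K (-3 - a ^ 2 + b ^ 2 * E) := by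
    simp only [map_mul, map_sub, map_add, map_neg, map_pow, map_ofNat, map_intCast]
    linear_combination hsq - (algebraMap ℚ K b) ^ 2 * hα
  have hab0 : a * b = 0 := by
    by_contra hne0
    refine hαQ ((-3 - a ^ 2 + b ^ 2 * E) / (2 * a * b)) ?_
    have h7 : algebraMap ℚ K (2 * a * b) ≠ 0 := by
      rw [map_ne_zero, mul_assoc]; exact mul_ne_zero two_ne_zero hne0
    rw [map_div₀, div_eq_iff h7, ← hrel]; ring
  have hrel2 : -3 - a ^ 2 + b ^ 2 * E = 0 := by
    apply (algebraMap ℚ K).injective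
    rw [← hrel, mul_assoc 2, hab0]; simp
  have hb0 : b ≠ 0 := by
    rintro rfl
    nlinarith [sq_nonneg a]
  have ha0 : a = 0 := (mul_eq_zero.1 hab0).resolve_right hb0
  subst ha0
  have hs : IsSquare ((3 * E : ℤ) : ℚ) := ⟨3 / b, by
    push_cast; field_simp; linear_combination hrel2⟩
  rw [Rat.isSquare_intCast_iff] at hs
  obtain ⟨t, ht⟩ := hs
  have h3t : (3 : ℤ) ∣ t := by
    have : (3 : ℤ) ∣ t * t := ⟨E, ht.symm⟩
    rcases Int.prime_three.dvd_or_dvd this with h | h <;> exact h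
  obtain ⟨c, rfl⟩ := h3t
  exact h3 ⟨c * c, by linarith⟩

theorem h94_span (S : Type*) [CommRing S] (s : S →+* S) (k l : ℤ) (hk : Odd k) (hl : Odd l)
    (w t : S) (h1 : w * t = - (k * l)) (h2 : t ^ 2 = t - l * w)
    (hw : w + s w + s (s w) = 0) (ht : t + s t + s (s t) = 1) :
    Ideal.span (Set.range fun x : S => x - s x) = ⊤ := by
  set I := Ideal.span (Set.range fun x : S => x - s x)
  have hq : ∀ x, Ideal.Quotient.mk I (s x) = Ideal.Quotient.mk I x := fun x =>
    (Ideal.Quotient.eq.2 (Ideal.subset_span (Set.mem_range_self (f := fun x : S => x - s x) x))).symm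
  have ew := congrArg (Ideal.Quotient.mk I) hw
  have et := congrArg (Ideal.Quotient.mk I) ht
  have e1 := congrArg (Ideal.Quotient.mk I) h1
  have e2 := congrArg (Ideal.Quotient.mk I) h2
  simp only [map_add, map_mul, map_sub, map_pow, map_neg, map_intCast, hq, map_one, map_zero]
    at ew et e1 e2
  rw [Ideal.eq_top_iff_one, ← Ideal.Quotient.eq_zero_iff_mem, map_one]
  generalize Ideal.Quotient.mk I w = W at *
  generalize Ideal.Quotient.mk I t = T at *
  have hW : W = 0 := by linear_combination T * ew - W * et
  subst hW
  have hT : T = 1 := by linear_combination 3 * e2 + (1 - T) * et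
  subst hT
  obtain ⟨a, rfl⟩ := hk
  obtain ⟨b, rfl⟩ := hl
  push_cast at e1
  have h2 : (2 : S ⧸ I) = 0 := by linear_combination et
  linear_combination e1 - (2 * a * b + a + b) * h2

theorem h94_final (K : Type*) [Field K] [NumberField K] (h : Module.finrank ℚ K = 2)
    (k l : ℤ) (hk0 : 0 < k) (hl0 : 0 < l) (hk : Odd k) (hl : Odd l) (hk3 : ¬ 3 ∣ k)
    (α : K) (hα : α ^ 2 = -((27 * l ^ 2 * k ^ 2 + 4 * k : ℤ) : K)) :
    3 ∣ NumberField.classNumber K := by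
  have hE : 0 < 27 * l ^ 2 * k ^ 2 + 4 * k := by positivity
  have hE3 : ¬ 3 ∣ 27 * l ^ 2 * k ^ 2 + 4 * k := by
    intro hd
    have : (3 : ℤ) ∣ 27 * l ^ 2 * k ^ 2 := ⟨9 * l ^ 2 * k ^ 2, by ring⟩
    omega
  have hkK : (k : K) ≠ 0 := by exact_mod_cast hk0.ne'
  have hlK : (l : K) ≠ 0 := by exact_mod_cast hl0.ne'
  have hEK : ((27 * l ^ 2 * k ^ 2 + 4 * k : ℤ) : K) ≠ 0 := by exact_mod_cast hE.ne'
  have hfin := h94_unit_fin K h (h94_tc K α _ hE hα)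
  have hβ : (α⁻¹) ^ 2 * (27 * (l : K) ^ 2 * (k : K) ^ 2 + 4 * (k : K)) = -1 := by
    have : (27 * (l : K) ^ 2 * (k : K) ^ 2 + 4 * (k : K)) = - α ^ 2 := by
      rw [hα]; push_cast; ring
    have hα0 : α ≠ 0 := by
      rintro rfl
      apply hEK
      rw [eq_comm, zero_pow two_ne_zero, neg_eq_zero] at hα
      exact hα
    rw [this]; field_simp
  obtain ⟨L, _, _, hfd, hfr, s, w, hw, hs, hsum, hsum2, hfix⟩ :=
    h94_ext K (k : K) l α⁻¹ hkK hlK hβ (h94_irr K h k l hk hl)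
  have : NumberField L := NumberField.of_module_finite K L
  simp only [map_mul, map_pow, map_intCast] at hw hsum2
  have hkL : (k : L) ≠ 0 := by exact_mod_cast hk0.ne'
  have hQL : 3 ≤ Module.finrank ℚ L := by
    rw [← Module.finrank_mul_finrank ℚ K L, h, hfr]; norm_num
  obtain ⟨e₀, he₀⟩ := h94_unit_inf L hQL
  obtain ⟨σ, hσ⟩ : ∃ σ : 𝓞 L ≃ₐ[𝓞 K] 𝓞 L, ∀ x : 𝓞 L, ((σ x : 𝓞 L) : L) = s x :=
    ⟨galRestrict (𝓞 K) K L (𝓞 L) s, fun x => algebraMap_galRestrict_apply (𝓞 K) s x⟩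
  have hwint : IsIntegral ℤ w := by
    refine ⟨Polynomial.X ^ 3 + Polynomial.C k * Polynomial.X + Polynomial.C (l * k ^ 2),
      by monicity!, ?_⟩
    simp only [Polynomial.eval₂_add, Polynomial.eval₂_sub, Polynomial.eval₂_mul, Polynomial.eval₂_pow,
      Polynomial.eval₂_X, Polynomial.eval₂_C]
    simp only [algebraMap_int_eq, eq_intCast]
    push_cast
    exact hw
  obtain ⟨t, ht⟩ : ∃ t : L, t = (w ^ 2 + k) / k := ⟨_, rfl⟩
  have htk : k * t = w ^ 2 + k := by rw [ht]; field_simp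
  have hwt : w * t = - (k * l) := by
    apply mul_left_cancel₀ hkL
    linear_combination w * htk + hw
  have ht2 : t ^ 2 = t - l * w := by
    apply mul_left_cancel₀ hkL
    linear_combination t * htk + w * hwt
  have htint : IsIntegral ℤ t := by
    refine ⟨Polynomial.X ^ 3 - Polynomial.X ^ 2 - Polynomial.C (k * l ^ 2),
      by monicity!, ?_⟩
    simp only [Polynomial.eval₂_add, Polynomial.eval₂_sub, Polynomial.eval₂_mul, Polynomial.eval₂_pow,
      Polynomial.eval₂_X, Polynomial.eval₂_C]
    simp only [algebraMap_int_eq, eq_intCast]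
    push_cast
    linear_combination t * ht2 - l * hwt
  have hst : t + s t + s (s t) = 1 := by
    have h1 : k * s t = s w ^ 2 + k := by
      have := congrArg s htk
      simpa using this
    have h2 : k * s (s t) = s (s w) ^ 2 + k := by
      have := congrArg s h1
      simpa using this
    apply mul_left_cancel₀ hkL
    linear_combination htk + h1 + h2 + hsum2
  obtain ⟨W, hW⟩ : ∃ W : 𝓞 L, (W : L) = w := ⟨⟨w, hwint⟩, rfl⟩
  obtain ⟨T, hT⟩ : ∃ T : 𝓞 L, (T : L) = t := ⟨⟨t, htint⟩, rfl⟩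
  have hI := h94_span (𝓞 L) (σ : 𝓞 L →+* 𝓞 L) k l hk hl W T
    (by ext; simpa [hW, hT] using hwt) (by ext; simpa [hW, hT] using ht2)
    (by ext; simpa [hσ, hW] using hsum) (by ext; simpa [hσ, hT] using hst)
  refine h94_main (R := 𝓞 K) (S := 𝓞 L) σ (fun x => ?_) (fun x hx => ?_) hI
    (h94_no3 K h α _ hE hE3 hα) e₀ he₀
  · ext; simp only [hσ, hs]
  · obtain ⟨r, hr⟩ := hfix x (by rw [← hσ, hx])
    have hrint : IsIntegral ℤ r := by
      rw [← isIntegral_algebraMap_iff (algebraMap K L).injective, hr]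
      exact x.2
    exact ⟨⟨r, hrint⟩, by ext; exact hr⟩

end NF

theorem class_number_div_three_of_sqrt_neg_sq_sq_add_four_mul_div_three
    (m n : ℤ) (hm : 0 < m) (hn : 0 < n) (hmodd : Odd m) (hnodd : Odd n)
    (hm3 : 3 ∣ m) (hn3 : 3 ∣ n) (hn9 : ¬ (9 ∣ n))
    (K : Type*) [Field K] [NumberField K] (hdeg : Module.finrank ℚ K = 2)
    (hsqrt : ∃ α : K, α ^ 2 = -((m : K) ^ 2 * (n : K) ^ 2 + 4 * (n : K)) / 3) :
    3 ∣ NumberField.classNumber K := by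
  obtain ⟨l, rfl⟩ := hm3
  obtain ⟨k, rfl⟩ := hn3
  obtain ⟨α, hα⟩ := hsqrt
  refine h94_final K hdeg k l (by omega) (by omega) (Int.odd_mul.1 hnodd).2
    (Int.odd_mul.1 hmodd).2 (fun hd => hn9 ?_) α ?_
  · obtain ⟨c, rfl⟩ := hd
    exact ⟨c, by ring⟩
  · rw [hα]; push_cast; ring
end

section
/- Let m and n be odd positive integers with m ≡ 0 (mod 3) and with 3 dividing n exactly once (that is, 3 ∣ n and 9 ∤ n). Then 3 divides the class number of the quadratic field ℚ(√(−(m²n² − 4n)/3)). -/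
open NumberField

set_option maxSynthPendingDepth 3

lemma aux_descent {A B : Type*} [CommRing A] [CommRing B] [Algebra A B] (s : B →+* B)
    (hs : ∀ b, s (s (s b)) = b) (hfix : ∀ b, s b = b → ∃ a : A, algebraMap A B a = b)
    (y : B) (h1 : y + s y + s (s y) = -1) (h2 : y * s y + s y * s (s y) + s (s y) * y = 0)
    (I : Ideal B) (hI : ∀ x ∈ I, s x ∈ I) :
    (I.comap (algebraMap A B)).map (algebraMap A B) = I := by
  refine le_antisymm Ideal.map_comap_le fun z hz => ?_
  set J := (I.comap (algebraMap A B)).map (algebraMap A B) with hJ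
  have hT : ∀ w ∈ I, w + s w + s (s w) ∈ J := by
    intro w hw
    obtain ⟨a, ha⟩ := hfix (w + s w + s (s w)) (by simp only [map_add, hs]; ring)
    rw [← ha]
    apply Ideal.mem_map_of_mem
    rw [Ideal.mem_comap, ha]
    exact I.add_mem (I.add_mem hw (hI _ hw)) (hI _ (hI _ hw))
  have key : ∀ t p : B, (t - s t) * (p - s (s p)) * z ∈ J := by
    intro t p
    have e : (t - s t) * (p - s (s p)) * z =
        ((z * (t * p)) + s (z * (t * p)) + s (s (z * (t * p))))
        - s (s p) * ((z * t) + s (z * t) + s (s (z * t)))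
        - s t * ((z * p) + s (z * p) + s (s (z * p)))
        + s t * s (s p) * (z + s z + s (s z)) := by
      simp only [map_mul]; ring
    rw [e]
    refine J.add_mem (J.sub_mem (J.sub_mem ?_ ?_) ?_) ?_
    · exact hT _ (I.mul_mem_right _ hz)
    · exact J.mul_mem_left _ (hT _ (I.mul_mem_right _ hz))
    · exact J.mul_mem_left _ (hT _ (I.mul_mem_right _ hz))
    · exact J.mul_mem_left _ (hT _ hz)
  have k1 := key y (s y)
  have k2 := key y (s (s y))
  have k3 := key (s y) (s (s y))
  simp only [hs] at k1 k2 k3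
  have e : z = -((y - s y) * (s y - y) * z) - ((y - s y) * (s (s y) - s y) * z)
      - (s y - s (s y)) * (s (s y) - s y) * z := by
    linear_combination (3 * z) * h2 + z * (1 - (y + s y + s (s y))) * h1
  rw [e]
  exact J.sub_mem (J.sub_mem (J.neg_mem k1) k2) k3

lemma aux_hilbert {B : Type*} [CommRing B] [IsDomain B] (s : B →+* B)
    (hs : ∀ b, s (s (s b)) = b)
    (y : B) (h1 : y + s y + s (s y) = -1) (h2 : y * s y + s y * s (s y) + s (s y) * y = 0)
    (η : B) (hη : η * s η * s (s η) = 1) : ∃ α : B, α ≠ 0 ∧ η * s α = α := by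
  by_contra hcon
  push Not at hcon
  have hF : ∀ z : B, z + η * s z + η * s η * s (s z) = 0 := by
    intro z
    by_contra hz
    apply hcon _ hz
    simp only [map_add, map_mul, hs]
    linear_combination z * hη
  have f0 := hF 1
  have f1 := hF y
  have f2 := hF (y * y)
  simp only [map_one, map_mul] at f0 f1 f2
  have e : (y - s y) * (y - s (s y)) = 0 := by
    linear_combination f2 - (s y + s (s y)) * f1 + (s y * s (s y)) * f0
  have hne : s y ≠ y := by
    intro h
    rw [h, h] at h1 h2
    have : (1 : B) = 0 := by linear_combination 3 * h2 + (1 - 3 * y) * h1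
    exact one_ne_zero this
  rcases mul_eq_zero.1 e with h | h
  · exact hne (sub_eq_zero.1 h).symm
  · apply hne
    conv_lhs => rw [sub_eq_zero.1 h, hs]

lemma aux_main {K L : Type*} [Field K] [NumberField K] [Field L] [NumberField L] [Algebra K L]
    (s : 𝓞 L →+* 𝓞 L)
    (hs : ∀ b, s (s (s b)) = b) (hfix : ∀ b, s b = b → ∃ a : 𝓞 K, algebraMap (𝓞 K) (𝓞 L) a = b)
    (hfix' : ∀ a : 𝓞 K, s (algebraMap (𝓞 K) (𝓞 L) a) = algebraMap (𝓞 K) (𝓞 L) a)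
    (y : 𝓞 L) (h1 : y + s y + s (s y) = -1) (h2 : y * s y + s y * s (s y) + s (s y) * y = 0)
    (η : (𝓞 L)ˣ) (hη : (η : 𝓞 L) * s η * s (s η) = 1)
    (hne : ¬ ∃ ε : (𝓞 L)ˣ, (η : 𝓞 L) * s ε = ε) : 3 ∣ NumberField.classNumber K := by
  obtain ⟨α, hα0, hα⟩ := aux_hilbert s hs y h1 h2 η hη
  have hass : Ideal.span {s α} = Ideal.span {α} := by
    rw [Ideal.span_singleton_eq_span_singleton]
    exact ⟨η, by rw [mul_comm, hα]⟩
  have hass2 : Ideal.span {s (s α)} = Ideal.span {α} := by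
    rw [← hass, Ideal.span_singleton_eq_span_singleton]
    exact ⟨Units.map s η, by rw [Units.coe_map, MonoidHom.coe_coe, mul_comm, ← map_mul, hα]⟩
  set I : Ideal (𝓞 L) := Ideal.span {α} with hI
  have hst : ∀ x ∈ I, s x ∈ I := by
    intro x hx
    obtain ⟨c, rfl⟩ := Ideal.mem_span_singleton'.1 hx
    rw [map_mul]
    apply I.mul_mem_left
    rw [← hass]
    exact Ideal.mem_span_singleton_self _
  have hJ := aux_descent (A := 𝓞 K) s hs hfix y h1 h2 I hst
  set J := I.comap (algebraMap (𝓞 K) (𝓞 L)) with hJdef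
  have hinj : Function.Injective (Ideal.map (algebraMap (𝓞 K) (𝓞 L))) := 
    Ideal.map_injective_of_faithfullyFlat
  have hJ0 : J ≠ ⊥ := by
    rintro h
    rw [h, Ideal.map_bot] at hJ
    exact hα0 (Ideal.span_singleton_eq_bot.1 hJ.symm)
  obtain ⟨a, ha⟩ := hfix (α * s α * s (s α)) (by simp only [map_mul, hs]; ring)
  have hJ3 : J ^ 3 = Ideal.span {a} := by
    apply hinj
    show Ideal.map _ _ = Ideal.map _ _
    rw [Ideal.map_pow, hJ, Ideal.map_span, Set.image_singleton, ha,
      ← Ideal.span_singleton_mul_span_singleton, ← Ideal.span_singleton_mul_span_singleton, hass,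
      hass2]
    ring
  have hJnp : ¬ J.IsPrincipal := by
    rintro ⟨b, hb⟩
    apply hne
    have hb' : J = Ideal.span {b} := hb
    rw [hb', Ideal.map_span, Set.image_singleton, hI, Ideal.span_singleton_eq_span_singleton] at hJ
    obtain ⟨ε, hε⟩ := hJ
    refine ⟨ε, ?_⟩
    have hb0 : algebraMap (𝓞 K) (𝓞 L) b ≠ 0 := by
      intro h; rw [h, zero_mul] at hε; exact hα0 hε.symm
    apply mul_left_cancel₀ hb0
    rw [hε]
    conv_rhs => rw [← hα, ← hε, map_mul, hfix']
    ring
  have hJm : J ∈ nonZeroDivisors (Ideal (𝓞 K)) := mem_nonZeroDivisors_of_ne_zero hJ0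
  let c : ClassGroup (𝓞 K) := ClassGroup.mk0 ⟨J, hJm⟩
  have hc1 : c ≠ 1 := by
    intro h
    exact hJnp ((ClassGroup.mk0_eq_one_iff hJm).1 h)
  have hc3 : c ^ 3 = 1 := by
    rw [← map_pow]
    refine (ClassGroup.mk0_eq_one_iff (pow_mem hJm 3)).2 ⟨a, hJ3⟩
  have : orderOf c = 3 := orderOf_eq_prime hc3 hc1
  rw [← this]
  exact orderOf_dvd_card

lemma aux_units {K L : Type*} [Field K] [NumberField K] [Field L] [NumberField L] [Algebra K L]
    (s : 𝓞 L →+* 𝓞 L)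
    (hs : ∀ b, s (s (s b)) = b) (hfix : ∀ b, s b = b → ∃ a : 𝓞 K, algebraMap (𝓞 K) (𝓞 L) a = b)
    (w : ℕ) (hw3 : ¬ 3 ∣ w) (hw : ∀ u : (𝓞 K)ˣ, u ^ w = 1)
    (hL : 3 ≤ Module.finrank ℚ L) :
    ∃ η : (𝓞 L)ˣ, (η : 𝓞 L) * s η * s (s η) = 1 ∧ ¬ ∃ ε : (𝓞 L)ˣ, (η : 𝓞 L) * s ε = ε := by
  by_contra hcon
  push Not at hcon
  let S : (𝓞 L)ˣ →* (𝓞 L)ˣ := Units.map s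
  have hS : ∀ u, S (S (S u)) = u := fun u => Units.ext (hs u)
  have hcon' : ∀ η : (𝓞 L)ˣ, η * S η * S (S η) = 1 → ∃ ε : (𝓞 L)ˣ, η * S ε = ε := by
    intro η h
    obtain ⟨ε, hε⟩ := hcon η (congrArg Units.val h)
    exact ⟨ε, Units.ext hε⟩
  have hN : ∀ u : (𝓞 L)ˣ, (u * S u * S (S u)) ^ w = 1 := by
    intro u
    have hSN : ∀ u : (𝓞 L)ˣ, S (u * S u * S (S u)) = u * S u * S (S u) := by
      intro u
      simp only [map_mul, hS]; rw [mul_comm, mul_assoc]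
    obtain ⟨a, ha⟩ := hfix _ (congrArg Units.val (hSN u))
    obtain ⟨b, hb⟩ := hfix _ (congrArg Units.val (by rw [map_inv, hSN u] : S (u * S u * S (S u))⁻¹ = _))
    have hab : a * b = 1 := by
      apply RingOfIntegers.algebraMap.injective K L
      rw [map_mul, ha, hb, map_one, Units.mul_inv]
    have := hw ⟨a, b, hab, by rw [mul_comm, hab]⟩
    apply Units.ext
    rw [Units.val_pow_eq_pow_val, ← ha, ← map_pow]
    have h2 := congrArg Units.val this
    simp only [Units.val_pow_eq_pow_val, Units.val_one] at h2
    rw [h2, map_one, Units.val_one]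
  have hD : ∀ u : (𝓞 L)ˣ, ∃ e, u ^ w * S e = e := by
    intro u
    apply hcon'
    rw [map_pow, map_pow, ← mul_pow, ← mul_pow, hN]
  have hR : 0 < Units.rank L := by
    have h1 := InfinitePlace.card_add_two_mul_card_eq_rank L
    have h2 := InfinitePlace.card_eq_nrRealPlaces_add_nrComplexPlaces L
    unfold Units.rank
    omega
  let i : Fin (Units.rank L) := ⟨0, hR⟩
  set u := Units.fundSystem L i with hu
  obtain ⟨e, he⟩ := hD u
  obtain ⟨f, hf⟩ := hD e
  have hfin : u ^ (w * w) = (f * S f * S (S f)) * ((S f)⁻¹) ^ 3 := by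
    have h1 : u ^ w = e * (S e)⁻¹ := eq_mul_inv_of_mul_eq he
    have h2 : e ^ w = f * (S f)⁻¹ := eq_mul_inv_of_mul_eq hf
    rw [pow_mul, h1, mul_pow, inv_pow, ← map_pow, h2, map_mul, map_inv]
    simp only [mul_inv, inv_inv]
    rw [show (f * S f * S (S f)) * ((S f)⁻¹) ^ 3 =
      (f * (S f)⁻¹ * ((S f)⁻¹ * S (S f))) * (S f * (S f)⁻¹) by rw [pow_three]; ac_rfl]
    rw [mul_inv_cancel, mul_one]
  have htor : f * S f * S (S f) ∈ Units.torsion L := by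
    refine (CommGroup.mem_torsion (G := (𝓞 L)ˣ) (f * S f * S (S f))).2 (isOfFinOrder_iff_pow_eq_one.2 ⟨w, ?_, hN f⟩)
    rcases Nat.eq_zero_or_pos w with h | h
    · subst h; exact absurd (dvd_zero 3) hw3
    · exact h
  let π : (𝓞 L)ˣ →* (𝓞 L)ˣ ⧸ Units.torsion L := QuotientGroup.mk' _
  have hq : (w * w) • Additive.ofMul (π u) = 3 • Additive.ofMul (π (S f)⁻¹) := by
    rw [← ofMul_pow, ← ofMul_pow, ← map_pow, ← map_pow, hfin, map_mul,
      (show π (f * S f * S (S f)) = 1 from (QuotientGroup.eq_one_iff _).2 htor), one_mul]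
  have hπ : Additive.ofMul (π u) = Units.basisModTorsion L i := Units.fundSystem_mk L i
  rw [hπ] at hq
  have hq2 := congrArg (fun x => (Units.basisModTorsion L).coord i x) hq
  simp only [map_nsmul, Module.Basis.coord_apply, Module.Basis.repr_self, Finsupp.single_eq_same] at hq2
  have : (3 : ℤ) ∣ (w : ℤ) * w := ⟨_, by simpa only [nsmul_eq_mul, mul_one, Nat.cast_mul, Nat.cast_ofNat] using hq2⟩
  have h3 : 3 ∣ w * w := by exact_mod_cast this
  rcases (Nat.Prime.dvd_mul Nat.prime_three).1 h3 with h | h <;> exact hw3 h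

open Polynomial in
lemma aux_ext {K : Type*} [Field K] [NumberField K] (c : ℤ) (S : K)
    (hS : S ^ 2 = 4 * c - 27 * c ^ 2) (hS0 : S ≠ 0) (hroot : ∀ x : K, x ^ 3 + x ^ 2 ≠ c)
    (w : ℕ) (hw3 : ¬ 3 ∣ w) (hw : ∀ u : (𝓞 K)ˣ, u ^ w = 1) : 3 ∣ NumberField.classNumber K := by
  let g : K[X] := X ^ 3 + X ^ 2 - C (c : K)
  have hdeg : g.natDegree = 3 := by simp only [g]; compute_degree!
  have hmon : g.Monic := by simp only [g]; monicity!
  have hirr : Irreducible g := by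
    rw [hmon.irreducible_iff_roots_eq_zero_of_degree_le_three (by omega) (by omega)]
    rw [Multiset.eq_zero_iff_forall_notMem]
    intro x hx
    have := (mem_roots'.1 hx).2
    simp only [g, IsRoot.def, eval_sub, eval_add, eval_pow, eval_X, eval_C] at this
    exact hroot x (sub_eq_zero.1 this)
  have : Fact (Irreducible g) := ⟨hirr⟩
  let L := AdjoinRoot g
  have : Module.Finite K L := hmon.finite_adjoinRoot
  have : NumberField L := NumberField.of_module_finite K L
  have hfr : Module.finrank K L = 3 := by
    rw [(AdjoinRoot.powerBasis' hmon).finrank, AdjoinRoot.powerBasis'_dim, hdeg]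
  let y : L := AdjoinRoot.root g
  have hy : y ^ 3 + y ^ 2 = c := by
    have := AdjoinRoot.eval₂_root g
    simp only [g, eval₂_sub, eval₂_add, eval₂_pow, eval₂_X, eval₂_C] at this
    exact (sub_eq_zero.1 this).trans (map_intCast (AdjoinRoot.of g) c)
  let T : L := algebraMap K L S
  have hT : T ^ 2 = 4 * c - 27 * c ^ 2 := by
    simp only [T]
    rw [← map_pow, hS]
    simp only [map_sub, map_mul, map_pow, map_ofNat, map_intCast]
  have hT0 : T ≠ 0 := by simpa [T] using hS0
  set d : L := 3 * y ^ 2 + 2 * y with hd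
  have hTd : T ^ 2 = d ^ 2 * ((1 + y) * (1 - 3 * y)) := by
    rw [hT, ← hy, hd]; ring
  have hd0 : d ≠ 0 := by
    intro h; rw [h] at hTd; apply hT0; simpa using hTd
  set q : L := T / d with hqd
  have hdq : d * q = T := by rw [hqd]; exact mul_div_cancel₀ T hd0
  have hq : q ^ 2 = (1 + y) * (1 - 3 * y) := by
    apply mul_left_cancel₀ (pow_ne_zero 2 hd0)
    rw [← hTd, ← hdq]; ring
  set y2 : L := (-(1 + y) + q) / 2 with hy2
  set y3 : L := (-(1 + y) - q) / 2 with hy3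
  have hy2r : y2 ^ 3 + y2 ^ 2 = c := by
    rw [← hy, hy2]
    linear_combination (q / 8 - 1 / 8 - 3 * y / 8) * hq
  have hev : g.eval₂ (Algebra.ofId K L : K →+* L) y2 = 0 := by
    simp only [g, eval₂_sub, eval₂_add, eval₂_pow, eval₂_X, eval₂_C]
    rw [map_intCast]
    exact sub_eq_zero.2 hy2r
  let σ₀ : L →ₐ[K] L := AdjoinRoot.liftAlgHom g (Algebra.ofId K L) y2 hev
  have h0 : σ₀ y = y2 := AdjoinRoot.lift_root hev
  have hσT : σ₀ T = T := σ₀.commutes S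
  have hσd : σ₀ d = 3 * y2 ^ 2 + 2 * y2 := by
    rw [hd]; simp only [map_add, map_mul, map_pow, map_ofNat, h0]
  have hσd0 : σ₀ d ≠ 0 := by simpa using hd0
  have hσq : σ₀ q = y3 - y := by
    apply mul_left_cancel₀ hσd0
    rw [← map_mul, hdq, hσT, ← hdq, hσd, hd, hy2, hy3]
    linear_combination (3 * q / 8 + 1 / 8 + 3 * y / 8) * hq
  have h00 : σ₀ y2 = y3 := by
    rw [hy2, map_div₀, map_add, map_neg, map_add, map_one, h0, hσq, map_ofNat, hy2, hy3]
    ring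
  have h000 : σ₀ y3 = y := by
    rw [hy3, map_div₀, map_sub, map_neg, map_add, map_one, h0, hσq, map_ofNat, hy2, hy3]
    ring
  have hcube : ∀ x, σ₀ (σ₀ (σ₀ x)) = x := by
    have : (σ₀.comp σ₀).comp σ₀ = AlgHom.id K L := by
      apply AdjoinRoot.algHom_ext
      show σ₀ (σ₀ (σ₀ y)) = y
      rw [h0, h00, h000]
    intro x
    exact DFunLike.congr_fun this x
  have hsum : y + y2 + y3 = -1 := by rw [hy2, hy3]; ring
  have he2 : y * y2 + y2 * y3 + y3 * y = 0 := by
    rw [hy2, hy3]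
    linear_combination (-1 / 4) * hq
  have hne : y2 ≠ y := by
    intro h
    have h' := h00
    rw [h, h0, h] at h'
    rw [← h', h] at hsum he2
    have : (1 : L) = 0 := by linear_combination 3 * he2 + (1 - 3 * y) * hsum
    exact one_ne_zero this
  let σ : L ≃ₐ[K] L := AlgEquiv.ofBijective σ₀ (AlgHom.bijective σ₀)
  have hσ : ∀ x, σ x = σ₀ x := fun x => rfl
  have hord : orderOf σ = 3 := by
    apply orderOf_eq_prime
    · ext x
      show σ₀ (σ₀ (σ₀ x)) = x
      exact hcube x
    · intro h
      apply hne
      rw [← h0, ← hσ, h]; rfl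
  have hfixK : ∀ x : L, σ₀ x = x → ∃ k : K, algebraMap K L k = x := by
    intro x hx
    let F := IntermediateField.fixedField (Subgroup.zpowers σ)
    have hF : Module.finrank F L = 3 := by
      rw [IntermediateField.finrank_fixedField_eq_card, Nat.card_zpowers, hord]
    have hF1 : Module.finrank K F = 1 := by
      have := Module.finrank_mul_finrank K F L
      rw [hF, hfr] at this
      omega
    have hFb : F = ⊥ := IntermediateField.finrank_eq_one_iff.1 hF1
    have hxF : x ∈ F := by
      rw [IntermediateField.mem_fixedField_iff]
      have : Subgroup.zpowers σ ≤ MulAction.stabilizer (L ≃ₐ[K] L) x := by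
        rw [Subgroup.zpowers_le]
        exact hx
      intro f hf
      exact this hf
    rw [hFb] at hxF
    exact IntermediateField.mem_bot.1 hxF
  let s : 𝓞 L →+* 𝓞 L := RingOfIntegers.mapRingHom (σ₀ : L →+* L)
  have hsc : ∀ b : 𝓞 L, ((s b : 𝓞 L) : L) = σ₀ b := fun b => rfl
  have hyint : IsIntegral ℤ y := by
    refine ⟨X ^ 3 + X ^ 2 - C c, by monicity!, ?_⟩
    simp only [eval₂_sub, eval₂_add, eval₂_pow, eval₂_X, eval₂_C]
    rw [hy]; simp
  let Y : 𝓞 L := ⟨y, hyint⟩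
  have hs : ∀ b, s (s (s b)) = b := fun b => RingOfIntegers.ext (hcube b)
  have hfix : ∀ b, s b = b → ∃ a : 𝓞 K, algebraMap (𝓞 K) (𝓞 L) a = b := by
    intro b hb
    obtain ⟨k, hk⟩ := hfixK (b : L) (by rw [← hsc, hb])
    have hki : IsIntegral ℤ k := by
      rw [← isIntegral_algebraMap_iff (algebraMap K L).injective, hk]
      exact RingOfIntegers.isIntegral_coe b
    exact ⟨⟨k, hki⟩, RingOfIntegers.ext hk⟩
  have hfix' : ∀ a : 𝓞 K, s (algebraMap (𝓞 K) (𝓞 L) a) = algebraMap (𝓞 K) (𝓞 L) a :=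
    fun a => RingOfIntegers.ext (σ₀.commutes (a : K))
  have hL : 3 ≤ Module.finrank ℚ L := by
    rw [← Module.finrank_mul_finrank ℚ K L, hfr]
    have : 0 < Module.finrank ℚ K := Module.finrank_pos
    omega
  obtain ⟨η, hη1, hη2⟩ := aux_units s hs hfix w hw3 hw hL
  refine aux_main s hs hfix hfix' Y ?_ ?_ η hη1 hη2
  · apply RingOfIntegers.ext
    show y + σ₀ y + σ₀ (σ₀ y) = _
    rw [h0, h00, hsum]; simp
  · apply RingOfIntegers.ext
    show y * σ₀ y + σ₀ y * σ₀ (σ₀ y) + σ₀ (σ₀ y) * y = _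
    rw [h0, h00, he2]; simp

lemma aux_units_K {K : Type*} [Field K] [NumberField K] (hdeg : Module.finrank ℚ K = 2)
    (D : ℤ) (hD : D < 0) (hD3 : ¬ 3 ∣ D) (α : K) (hα : α ^ 2 = D) :
    ∃ w : ℕ, ¬ 3 ∣ w ∧ ∀ u : (𝓞 K)ˣ, u ^ w = 1 := by
  have hreal : InfinitePlace.nrRealPlaces K = 0 := by
    classical
    rw [InfinitePlace.nrRealPlaces, Fintype.card_eq_zero_iff]
    refine ⟨fun ⟨v, hv⟩ => ?_⟩
    have := congrArg (InfinitePlace.embedding_of_isReal hv) hα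
    rw [map_pow, map_intCast] at this
    have h2 : (D : ℝ) < 0 := by exact_mod_cast hD
    nlinarith [sq_nonneg (InfinitePlace.embedding_of_isReal hv α)]
  have hrank : Units.rank K = 0 := by
    have h1 := InfinitePlace.card_add_two_mul_card_eq_rank K
    have h2 := InfinitePlace.card_eq_nrRealPlaces_add_nrComplexPlaces K
    unfold Units.rank
    omega
  refine ⟨Units.torsionOrder K, ?_, ?_⟩
  · intro h3
    have hp : Fact (Nat.Prime 3) := ⟨Nat.prime_three⟩
    obtain ⟨t, ht⟩ := exists_prime_orderOf_dvd_card' (G := Units.torsion K) 3 h3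
    have ht3 : t ^ 3 = 1 := by rw [← ht, pow_orderOf_eq_one]
    have ht1 : t ≠ 1 := by rintro rfl; simp at ht
    let z : K := ((t : (𝓞 K)ˣ) : K)
    have hz3 : z ^ 3 = 1 := by
      have := congrArg (fun x : Units.torsion K => ((x : (𝓞 K)ˣ) : K)) ht3
      simpa [z] using this
    have hz1 : z ≠ 1 := by
      intro h
      apply ht1
      apply Subtype.ext
      apply Units.coe_injective K
      simpa [z] using h
    have hz : z ^ 2 + z + 1 = 0 := by
      apply mul_left_cancel₀ (sub_ne_zero.2 hz1)
      linear_combination hz3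
    have hβ : (2 * z + 1) ^ 2 = -3 := by linear_combination 4 * hz
    -- α generates
    have hαq : ∀ r : ℚ, (r : K) ≠ α := by
      rintro r rfl
      have : r ^ 2 = D := by exact_mod_cast hα
      have h2 : (D : ℚ) < 0 := by exact_mod_cast hD
      nlinarith [sq_nonneg r]
    have hspan : ∃ a b : ℚ, 2 * z + 1 = a + b * α := by
      have hli : LinearIndependent ℚ ![(1 : K), α] := by
        rw [LinearIndependent.pair_iff]
        intro x y hxy
        rw [Rat.smul_def, Rat.smul_def] at hxy
        by_cases hy : y = 0
        · subst hy; simpa using hxy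
        · exfalso
          apply hαq (-x / y)
          have hy' : (y : K) ≠ 0 := by exact_mod_cast hy
          push_cast
          field_simp
          linear_combination -hxy
      have htop := hli.span_eq_top_of_card_eq_finrank' (by simp [hdeg])
      have hmem : 2 * z + 1 ∈ Submodule.span ℚ (Set.range ![(1 : K), α]) := by
        rw [htop]; trivial
      rw [Matrix.range_cons, Matrix.range_cons, Matrix.range_empty, Set.union_empty,
        Set.singleton_union, Submodule.mem_span_pair] at hmem
      obtain ⟨a, b, hab⟩ := hmem
      refine ⟨a, b, ?_⟩
      rw [← hab, Rat.smul_def, Rat.smul_def, mul_one]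
    obtain ⟨a, b, hab⟩ := hspan
    rw [hab] at hβ
    have hexp : ((a ^ 2 + b ^ 2 * D + 3 : ℚ) : K) + ((2 * a * b : ℚ) : K) * α = 0 := by
      push_cast
      linear_combination hβ - (b : K) ^ 2 * hα
    have hab0 : 2 * a * b = 0 := by
      by_contra hne
      apply hαq (-(a ^ 2 + b ^ 2 * D + 3) / (2 * a * b))
      have hy' : ((2 * a * b : ℚ) : K) ≠ 0 := by exact_mod_cast hne
      rw [Rat.cast_div, div_eq_iff hy', Rat.cast_neg]
      linear_combination -hexp
    have hE : a ^ 2 + b ^ 2 * D + 3 = 0 := by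
      rw [hab0] at hexp
      have : ((a ^ 2 + b ^ 2 * D + 3 : ℚ) : K) = 0 := by simpa using hexp
      exact_mod_cast this
    have hbne : b ≠ 0 := by
      rintro rfl
      nlinarith [sq_nonneg a]
    have ha0 : a = 0 := by
      have : a * b = 0 := by linarith
      exact (mul_eq_zero.1 this).resolve_right hbne
    subst ha0
    have hbD : b ^ 2 * D = -3 := by linarith
    have hD0 : (D : ℚ) ≠ 0 := by exact_mod_cast hD.ne
    have hv := congrArg (padicValRat 3) hbD
    rw [padicValRat.mul (pow_ne_zero 2 hbne) hD0, padicValRat.pow, padicValRat.of_int,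
      padicValInt.eq_zero_of_not_dvd (by exact_mod_cast hD3), padicValRat.neg] at hv
    have h33 : padicValRat 3 (3 : ℚ) = 1 := by
      have := padicValRat.self (p := 3) (by norm_num)
      simpa using this
    rw [h33] at hv
    push_cast at hv
    omega
  · intro u
    obtain ⟨⟨ζ, f⟩, hu, -⟩ := Units.exist_unique_eq_mul_prod K u
    have : IsEmpty (Fin (Units.rank K)) := by rw [hrank]; infer_instance
    simp only [Finset.univ_eq_empty, Finset.prod_empty, mul_one] at hu
    rw [hu]
    have : ζ ^ Units.torsionOrder K = 1 := pow_card_eq_one'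
    simpa using congrArg Subtype.val this

lemma aux_noroot {K : Type*} [Field K] [NumberField K] (hdeg : Module.finrank ℚ K = 2)
    (c : ℤ) (hc : Odd c) (x : K) : x ^ 3 + x ^ 2 ≠ c := by
  intro hx
  let g : Polynomial ℚ := .X ^ 3 + .X ^ 2 - .C (c : ℚ)
  have hgdeg : g.natDegree = 3 := by simp only [g]; compute_degree!
  have hmon : g.Monic := by simp only [g]; monicity!
  have hirr : Irreducible g := by
    rw [hmon.irreducible_iff_roots_eq_zero_of_degree_le_three (by omega) (by omega)]
    rw [Multiset.eq_zero_iff_forall_notMem]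
    intro r hr
    have := (Polynomial.mem_roots'.1 hr).2
    simp only [g, Polynomial.IsRoot.def, Polynomial.eval_sub, Polynomial.eval_add,
      Polynomial.eval_pow, Polynomial.eval_X, Polynomial.eval_C] at this
    have hint : IsIntegral ℤ r := by
      refine ⟨.X ^ 3 + .X ^ 2 - .C c, by monicity!, ?_⟩
      simp only [Polynomial.eval₂_sub, Polynomial.eval₂_add, Polynomial.eval₂_pow,
        Polynomial.eval₂_X, Polynomial.eval₂_C]
      exact this
    obtain ⟨z, hz⟩ := IsIntegrallyClosed.isIntegral_iff.1 hint
    rw [← hz] at this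
    simp only [eq_intCast] at this
    have h : z ^ 3 + z ^ 2 = c := by
      have : (z : ℚ) ^ 3 + z ^ 2 = c := by linarith
      exact_mod_cast this
    rw [← h] at hc
    have h2 : Even (z ^ 3 + z ^ 2) := by
      rw [show z ^ 3 + z ^ 2 = z * (z * (z + 1)) by ring]
      exact (Int.even_mul_succ_self z).mul_left z
    exact (Int.not_odd_iff_even.2 h2) hc
  have hev : Polynomial.aeval x g = 0 := by
    simp [g, hx]
  have hmin := minpoly.eq_of_irreducible_of_monic hirr hev hmon
  have hdvd := minpoly.degree_dvd (K := ℚ) (x := x) (Algebra.IsIntegral.isIntegral x)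
  rw [← hmin, hgdeg, hdeg] at hdvd
  omega

/-- Let `m` and `n` be odd positive integers with `m ≡ 0 (mod 3)` and with `3` dividing `n`
exactly once.  Then `3` divides the class number of `ℚ(√(-(m² n² - 4 n) / 3))`. -/
theorem class_number_div_three_of_sqrt_neg_sq_sq_sub_four_mul_div_three
    (m n : ℤ) (hm : 0 < m) (hn : 0 < n) (hmodd : Odd m) (hnodd : Odd n)
    (hm3 : 3 ∣ m) (hn3 : 3 ∣ n) (hn9 : ¬ (9 ∣ n))
    (K : Type*) [Field K] [NumberField K] (hdeg : Module.finrank ℚ K = 2)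
    (hsqrt : ∃ α : K, α ^ 2 = -((m : K) ^ 2 * (n : K) ^ 2 - 4 * (n : K)) / 3) :
    3 ∣ NumberField.classNumber K := by

  obtain ⟨l, rfl⟩ := hm3
  obtain ⟨k, rfl⟩ := hn3
  obtain ⟨α, hα⟩ := hsqrt
  have hl : Odd l := (Int.odd_mul.1 hmodd).2
  have hk : Odd k := (Int.odd_mul.1 hnodd).2
  have hl0 : 0 < l := by omega
  have hk0 : 0 < k := by omega
  have hk3 : ¬ 3 ∣ k := by
    rintro ⟨j, rfl⟩
    exact hn9 ⟨j, by ring⟩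
  have hα' : α ^ 2 = ((4 * k - 27 * l ^ 2 * k ^ 2 : ℤ) : K) := by
    rw [hα]; push_cast; field_simp; ring
  have hneg : 4 * k - 27 * l ^ 2 * k ^ 2 < 0 := by
    have h1 : 1 ≤ l ^ 2 := by nlinarith
    have h2 : k ≤ k ^ 2 := by nlinarith
    have h3 : k ^ 2 ≤ l ^ 2 * k ^ 2 := by nlinarith [sq_nonneg k]
    nlinarith
  have hD3 : ¬ 3 ∣ 4 * k - 27 * l ^ 2 * k ^ 2 := by
    intro h
    apply hk3
    have h' : 4 * k - 27 * l ^ 2 * k ^ 2 = 4 * k - 27 * (l ^ 2 * k ^ 2) := by ring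
    rw [h'] at h
    omega
  obtain ⟨w, hw3, hw⟩ := aux_units_K hdeg _ hneg hD3 α hα'
  have hα0 : α ≠ 0 := by
    rintro rfl
    have : ((4 * k - 27 * l ^ 2 * k ^ 2 : ℤ) : K) = 0 := by rw [← hα']; simp
    have : 4 * k - 27 * l ^ 2 * k ^ 2 = 0 := by exact_mod_cast this
    omega
  have hlK : (l : K) ≠ 0 := by exact_mod_cast hl0.ne'
  refine aux_ext (l ^ 2 * k) (l * α) ?_ (mul_ne_zero hlK hα0) ?_ w hw3 hw
  · rw [mul_pow, hα']; push_cast; ring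
  · exact aux_noroot hdeg _ ((hl.pow).mul hk)
end

section
/- Let n > 1 be an odd integer, and let a and b be integers satisfying a ≡ 19 (mod 30), b ≡ 6 (mod 15), and gcd(a, b) = 1. Then 3 divides the class number of the quadratic field ℚ(√(3(a^{3n} − b^{2n}))). -/
section Helpers

theorem exists_surj_zmod3 (X : Type*) [AddCommGroup X] [Module.Finite ℤ X] :
    ∃ d : ℕ, Module.finrank ℤ X = d ∧
    ∃ ψ : X →+ (Fin d → ZMod 3), Function.Surjective ψ := by
  refine ⟨_, rfl, ?_⟩
  have h : Module.finrank ℤ (X ⧸ Submodule.torsion ℤ X) = Module.finrank ℤ X :=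
    finrank_quotient_eq_of_le_torsion le_rfl
  rw [← h]
  let b := Module.finBasis ℤ (X ⧸ Submodule.torsion ℤ X)
  let f1 : X →+ (X ⧸ Submodule.torsion ℤ X) := (Submodule.mkQ _).toAddMonoidHom
  let f2 := b.equivFun.toLinearMap.toAddMonoidHom
  let f3 : (Fin (Module.finrank ℤ (X ⧸ Submodule.torsion ℤ X)) → ℤ) →+
    (Fin (Module.finrank ℤ (X ⧸ Submodule.torsion ℤ X)) → ZMod 3) :=
      (Int.castAddHom (ZMod 3)).compLeft _
  refine ⟨f3.comp (f2.comp f1), ?_⟩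
  have h1 : Function.Surjective f1 := Submodule.mkQ_surjective _
  have h2 : Function.Surjective f2 := b.equivFun.surjective
  have h3 : Function.Surjective f3 := by
    intro y
    refine ⟨fun i => ((y i).val : ℤ), ?_⟩
    funext i
    simp [f3]
  exact h3.comp (h2.comp h1)

theorem torsion_mem_three (X : Type*) [AddCommGroup X] (h3 : ∀ x : X, 3 • x = 0 → x = 0)
    (t : X) (m : ℕ) (hm : 0 < m) (ht : m • t = 0) : ∃ y, t = 3 • y := by
  induction m using Nat.strong_induction_on with
  | _ m ih =>
    by_cases hd : 3 ∣ m
    · obtain ⟨k, rfl⟩ := hd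
      refine ih k (by omega) (by omega) (h3 _ ?_)
      rw [← mul_smul]; exact ht
    · have hc : m % 3 = 1 ∨ m % 3 = 2 := by omega
      rcases hc with hc | hc
      · refine ⟨-((m / 3) • t), ?_⟩
        have e : m = 3 * (m/3) + 1 := by omega
        rw [e, add_smul, mul_smul, one_smul] at ht
        rw [smul_neg]; exact eq_neg_of_add_eq_zero_right ht
      · refine ⟨((m / 3 + 1) • t), ?_⟩
        have e : 3 * (m/3 + 1) = m + 1 := by omega
        rw [← mul_smul, e, add_smul, ht]; simp

theorem index_three_le (X : Type*) [AddCommGroup X] [Module.Finite ℤ X]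
    (h3 : ∀ x : X, 3 • x = 0 → x = 0) :
    (nsmulAddMonoidHom 3 : X →+ X).range.index ≤ 3 ^ Module.finrank ℤ X ∧
    (nsmulAddMonoidHom 3 : X →+ X).range.index ≠ 0 := by
  have h : Module.finrank ℤ (X ⧸ Submodule.torsion ℤ X) = Module.finrank ℤ X :=
    finrank_quotient_eq_of_le_torsion le_rfl
  rw [← h]
  set r := Module.finrank ℤ (X ⧸ Submodule.torsion ℤ X)
  let b := Module.finBasis ℤ (X ⧸ Submodule.torsion ℤ X)
  choose c hc using fun i => Submodule.mkQ_surjective (Submodule.torsion ℤ X) (b i)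
  let R := (nsmulAddMonoidHom 3 : X →+ X).range
  let F : (Fin r → Fin 3) → X ⧸ R := fun e => QuotientAddGroup.mk (∑ i, (e i : ℕ) • c i)
  have hF : Function.Surjective F := by
    intro q
    obtain ⟨x, rfl⟩ := QuotientAddGroup.mk_surjective q
    let z := b.repr (Submodule.mkQ _ x)
    have h1 : x - ∑ i, z i • c i ∈ Submodule.torsion ℤ X := by
      rw [← Submodule.Quotient.mk_eq_zero, ← Submodule.mkQ_apply, map_sub, map_sum]
      simp only [map_smul, hc]
      rw [b.sum_repr, sub_self]
    obtain ⟨⟨m, hm⟩, ht⟩ := (Submodule.mem_torsion_iff _).1 h1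
    have hm0 : m ≠ 0 := nonZeroDivisors.ne_zero hm
    obtain ⟨y, hy⟩ := torsion_mem_three X h3 _ m.natAbs (by omega)
      (by
        have ht' : m • (x - ∑ i, z i • c i) = 0 := ht
        rcases Int.natAbs_eq m with h | h
        · rw [h] at ht'; simpa using ht'
        · rw [h] at ht'; simpa using ht')
    refine ⟨fun i => ⟨(z i % 3).toNat, by omega⟩, ?_⟩
    rw [QuotientAddGroup.eq]
    refine ⟨y + ∑ i, (z i / 3) • c i, ?_⟩
    have e1 : x = 3 • y + ∑ i, z i • c i := by rw [← hy]; abel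
    have e2 : ∑ i, z i • c i = ∑ i, (z i % 3).toNat • c i + 3 • ∑ i, (z i / 3) • c i := by
      rw [Finset.smul_sum, ← Finset.sum_add_distrib]
      refine Finset.sum_congr rfl fun i _ => ?_
      rw [← natCast_zsmul, ← natCast_zsmul _ 3, ← mul_smul, ← add_smul]
      congr 1
      have : 0 ≤ z i % 3 := Int.emod_nonneg _ (by norm_num)
      push_cast [Int.toNat_of_nonneg this]
      omega
    rw [e2] at e1
    change (3 : ℕ) • (y + ∑ i, (z i / 3) • c i) = -(∑ i, (z i % 3).toNat • c i : X) + x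
    rw [smul_add]
    generalize (∑ i, (z i % 3).toNat • c i) = A at *
    rw [e1]
    abel
  have hfin : Finite (X ⧸ R) := Finite.of_surjective F hF
  constructor
  · have := Nat.card_le_card_of_surjective F hF
    simpa [AddSubgroup.index] using this
  · exact AddSubgroup.index_ne_zero_of_finite

theorem abstract_unit {M X : Type*} [AddCommGroup M] [AddCommGroup X] [Module.Finite ℤ M]
    [Module.Finite ℤ X]
    (s : M →+ M) (hs : ∀ x, s (s (s x)) = x) (i : X →+ M) (hi : Function.Injective i)
    (hfix : ∀ x, s (i x) = i x) (hfix' : ∀ m, s m = m → ∃ x, i x = m)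
    (h3 : ∀ x : X, 3 • x = 0 → x = 0)
    (hrank : Module.finrank ℤ M = 3 * Module.finrank ℤ X + 2) :
    ∃ v : M, v + s v + s (s v) = 0 ∧ ∀ u, v ≠ u - s u := by
  by_contra! hcon
  set r := Module.finrank ℤ X
  obtain ⟨hi1, hi0⟩ := index_three_le X h3
  let D : M →+ M := AddMonoidHom.id M - s
  let Nm : M →+ M := AddMonoidHom.id M + s + s.comp s
  have hD : ∀ x, D x = x - s x := fun x => rfl
  have hNm : ∀ x, Nm x = x + s x + s (s x) := fun x => rfl
  let V := Nm.ker
  have hVr : V = AddSubgroup.map D ⊤ := by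
    ext v
    constructor
    · intro hv
      obtain ⟨u, hu⟩ := hcon v hv
      exact ⟨u, trivial, hu.symm⟩
    · rintro ⟨u, -, rfl⟩
      change Nm (D u) = 0
      rw [hNm, hD]
      simp only [map_sub, hs]
      abel
  have hW : D.ker = i.range := by
    ext w
    rw [AddMonoidHom.mem_ker, hD, sub_eq_zero]
    constructor
    · intro h
      exact hfix' w h.symm
    · rintro ⟨x, rfl⟩
      exact (hfix x).symm
  let T : AddSubgroup M := AddSubgroup.map i (nsmulAddMonoidHom 3 : X →+ X).range
  have hT : T.relIndex D.ker = (nsmulAddMonoidHom 3 : X →+ X).range.index := by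
    rw [hW, AddMonoidHom.range_eq_map, AddSubgroup.relIndex_map_map_of_injective _ _ hi,
      AddSubgroup.relIndex_top_right]
  have hNmr : Nm.range ≤ D.ker := by
    rintro _ ⟨x, rfl⟩
    rw [AddMonoidHom.mem_ker, hD, hNm]
    simp only [map_add, hs]
    abel
  have hTN0 : T.relIndex Nm.range ≠ 0 := fun h =>
    hi0 (hT ▸ AddSubgroup.relIndex_eq_zero_of_le_right hNmr h)
  have hTN : T.relIndex Nm.range ≤ 3 ^ r :=
    (AddSubgroup.relIndex_le_of_le_right hNmr (hT ▸ hi0)).trans (hT ▸ hi1)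
  rw [← AddSubgroup.index_comap] at hTN hTN0
  have hcom : T.comap Nm ≤ V ⊔ D.ker := by
    intro u hu
    obtain ⟨_, ⟨x, rfl⟩, hx⟩ := hu
    rw [AddSubgroup.mem_sup]
    refine ⟨u - i x, ?_, i x, ?_, by abel⟩
    · change Nm (u - i x) = 0
      rw [map_sub, ← hx, hNm (i x), hfix, hfix]
      simp only [nsmulAddMonoidHom_apply, map_nsmul]
      abel
    · rw [hW]; exact ⟨x, rfl⟩
  have hVW : (V ⊔ D.ker).index ∣ (T.comap Nm).index := AddSubgroup.index_dvd_of_le hcom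
  have hVW0 : (V ⊔ D.ker).index ≠ 0 := ne_zero_of_dvd_ne_zero hTN0 hVW
  have hVW1 : (V ⊔ D.ker).index ≤ 3 ^ r := (Nat.le_of_dvd (Nat.pos_of_ne_zero hTN0) hVW).trans hTN
  have key : (AddSubgroup.map D V).relIndex V = (V ⊔ D.ker).index := by
    have h := AddSubgroup.relIndex_map_map D V ⊤
    rw [← hVr] at h
    rw [h]
    simp
  have hDV : AddSubgroup.map D V ≤ V := by
    conv_rhs => rw [hVr]
    exact AddSubgroup.map_mono le_top
  have key2 : (AddSubgroup.map D (AddSubgroup.map D V)).relIndex (AddSubgroup.map D V) ∣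
      (AddSubgroup.map D V).relIndex V := by
    rw [AddSubgroup.relIndex_map_map]
    have : V ⊔ D.ker = V ⊔ (AddSubgroup.map D V ⊔ D.ker) := by
      rw [← sup_assoc, sup_eq_left.2 hDV]
    rw [this, AddSubgroup.relIndex_sup_right]
    exact AddSubgroup.relIndex_dvd_of_le_left _ le_sup_left
  have key3 := AddSubgroup.relIndex_mul_relIndex _ _ _ (AddSubgroup.map_mono hDV) hDV
  let Q := AddSubgroup.map (nsmulAddMonoidHom 3 : M →+ M) V
  have hQ : AddSubgroup.map D (AddSubgroup.map D V) ≤ Q := by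
    rintro _ ⟨_, ⟨v, hv, rfl⟩, rfl⟩
    have hv' : v + s v + s (s v) = 0 := hv
    refine ⟨- s v, ?_, ?_⟩
    · change Nm (- s v) = 0
      rw [hNm]
      simp only [map_neg, hs]
      rw [← neg_eq_zero.2 hv']; abel
    · rw [hD, hD]
      simp only [nsmulAddMonoidHom_apply, map_sub]
      have : s (s v) = - v - s v := by
        rw [eq_sub_iff_add_eq, eq_neg_iff_add_eq_zero, ← hv']; abel
      rw [this]; abel
  have hQ1 : Q.relIndex V ∣ (V ⊔ D.ker).index * (V ⊔ D.ker).index := by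
    refine (AddSubgroup.relIndex_dvd_of_le_left _ hQ).trans ?_
    rw [← key3, key]
    exact mul_dvd_mul (key ▸ key2) dvd_rfl
  obtain ⟨d, hd, ψ, hψ⟩ := exists_surj_zmod3 (LinearMap.ker Nm.toIntLinearMap)
  let ψ' : V →+ (Fin d → ZMod 3) := ψ
  have hψi : ψ'.ker.index ∣ Q.relIndex V := by
    apply AddSubgroup.index_dvd_of_le
    rintro ⟨x, hx⟩ hxQ
    obtain ⟨v, hv, hvx⟩ := hxQ
    have : (⟨x, hx⟩ : V) = 3 • (⟨v, hv⟩ : V) := by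
      apply Subtype.ext
      exact hvx.symm
    rw [AddMonoidHom.mem_ker, this, map_nsmul]
    funext j
    have h30 : (3 : ZMod 3) = 0 := rfl
    rw [Pi.smul_apply, nsmul_eq_mul]
    simp [h30]
  have hcard : ψ'.ker.index = 3 ^ d := by
    have : Function.Surjective ψ' := hψ
    rw [AddSubgroup.index_ker, AddMonoidHom.range_eq_top.2 this]
    simp
  have hle : 3 ^ d ≤ 3 ^ (r + r) := by
    rw [← hcard, pow_add]
    exact (Nat.le_of_dvd (Nat.pos_of_ne_zero (mul_ne_zero hVW0 hVW0)) (hψi.trans hQ1)).trans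
      (Nat.mul_le_mul hVW1 hVW1)
  have hle' := (Nat.pow_le_pow_iff_right (by norm_num)).1 hle
  have hrn := Submodule.finrank_quotient_add_finrank (LinearMap.ker Nm.toIntLinearMap)
  rw [(Nm.toIntLinearMap.quotKerEquivRange).finrank_eq] at hrn
  have hrange : Module.finrank ℤ (LinearMap.range Nm.toIntLinearMap) ≤ r := by
    have h1 : LinearMap.range Nm.toIntLinearMap ≤ LinearMap.range i.toIntLinearMap := by
      intro y hy
      have : y ∈ D.ker := hNmr hy
      rw [hW] at this
      exact this
    refine (Submodule.finrank_mono h1).trans ?_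
    exact LinearMap.finrank_range_le _
  omega
open NumberField
open scoped Pointwise

theorem invariant_ideal_extended (K L : Type*) [Field K] [NumberField K] [Field L] [NumberField L]
    [Algebra K L] [IsGalois K L]
    (hunr : ∀ σ : Gal(L/K), ∀ P : Ideal (𝓞 L), P.IsPrime → (∀ x : 𝓞 L, σ • x - x ∈ P) → σ = 1)
    (I : Ideal (𝓞 L)) (hI0 : I ≠ ⊥) (hI : ∀ σ : Gal(L/K), σ • I = I) :
    ∃ J : Ideal (𝓞 K), I = J.map (algebraMap (𝓞 K) (𝓞 L)) := by
  induction I using IsNoetherian.induction with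
  | hgt I ih =>
    by_cases htop : I = ⊤
    · exact ⟨⊤, by rw [htop, Ideal.map_top]⟩
    obtain ⟨P, hPm, hIP⟩ := Ideal.exists_le_maximal I htop
    have hPp := hPm.isPrime
    let p := P.under (𝓞 K)
    have hP0 : P ≠ ⊥ := fun h => hI0 (le_bot_iff.1 (h ▸ hIP))
    have hp0 : p ≠ ⊥ := by
      intro h
      exact hP0 (Ideal.eq_bot_of_comap_eq_bot h)
    have hpp : p.IsPrime := inferInstance
    have hpm : p.IsMaximal := hpp.isMaximal hp0
    have hmap := Ideal.map_algebraMap_eq_finsetProd_pow (R := 𝓞 L) (p := p) hp0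
    have hram : ∀ Q ∈ (p.primesOver (𝓞 L)).toFinset, Q.ramificationIdx (𝓞 K) = 1 := by
      intro Q hQ
      rw [Set.mem_toFinset] at hQ
      have := hQ.1
      have := hQ.2
      rw [← Ideal.ramificationIdxIn_eq_ramificationIdx p Q Gal(L/K),
        ← Ideal.card_inertia_eq_ramificationIdxIn (G := Gal(L/K)) p Q]
      rw [Nat.card_eq_one_iff_unique]
      refine ⟨⟨fun x y => ?_⟩, ⟨1⟩⟩
      have hh : ∀ x : Q.inertia Gal(L/K), x = 1 := fun x =>
        Subtype.ext (hunr x.1 Q inferInstance x.2)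
      rw [hh x, hh y]
    rw [Finset.prod_congr rfl (fun Q hQ => by rw [hram Q hQ, pow_one])] at hmap
    have hdvd : p.map (algebraMap (𝓞 K) (𝓞 L)) ∣ I := by
      rw [hmap]
      apply Finset.prod_primes_dvd
      · intro Q hQ
        rw [Set.mem_toFinset] at hQ
        have := hQ.1
        have := hQ.2
        exact Ideal.prime_of_isPrime (Ideal.ne_bot_of_liesOver_of_ne_bot hp0 Q) inferInstance
      · intro Q hQ
        rw [Set.mem_toFinset] at hQ
        have := hQ.1
        have := hQ.2
        obtain ⟨σ, hσ⟩ := Ideal.exists_smul_eq_of_isGaloisGroup p P Q Gal(L/K)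
        rw [Ideal.dvd_iff_le, ← hσ, ← hI σ]
        exact Ideal.pointwise_smul_le_pointwise_smul_iff.2 hIP
    obtain ⟨I', hI'⟩ := hdvd
    have hmap0 : p.map (algebraMap (𝓞 K) (𝓞 L)) ≠ ⊥ := by
      intro h; rw [h] at hI'; exact hI0 (by rw [hI', ← Ideal.zero_eq_bot, zero_mul])
    have hI'0 : I' ≠ ⊥ := by
      intro h; rw [h] at hI'; exact hI0 (by rw [hI', ← Ideal.zero_eq_bot, mul_zero])
    have hpinv : ∀ σ : Gal(L/K), σ • p.map (algebraMap (𝓞 K) (𝓞 L)) = p.map (algebraMap (𝓞 K) (𝓞 L)) := by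
      intro σ
      rw [Ideal.pointwise_smul_def, Ideal.map_map]
      congr 1
      ext x
      exact σ.commutes _
    have hle : I ≤ I' := by rw [hI']; exact Ideal.mul_le_right (I := p.map (algebraMap (𝓞 K) (𝓞 L))) (J := I')
    have hne : I ≠ I' := by
      intro h
      rw [← h] at hI'
      have h1 : p.map (algebraMap (𝓞 K) (𝓞 L)) = 1 := by
        apply mul_right_cancel₀ (b := I) hI0
        rw [← hI', one_mul]
      rw [Ideal.one_eq_top] at h1
      have h2 : p.map (algebraMap (𝓞 K) (𝓞 L)) ≤ P := Ideal.map_comap_le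
      rw [h1] at h2
      exact hPm.ne_top (top_le_iff.1 h2)
    obtain ⟨J, hJ⟩ := ih I' (lt_of_le_of_ne hle hne) hI'0 (by
      intro σ
      apply mul_left_cancel₀ (a := p.map (algebraMap (𝓞 K) (𝓞 L))) hmap0
      rw [← hI']
      conv_rhs => rw [← hI σ, hI', smul_mul', hpinv])
    exact ⟨p * J, by rw [Ideal.map_mul, ← hJ, hI']⟩

theorem hilbert90_cubic {K L : Type*} [Field K] [NumberField K] [Field L] [NumberField L]
    [Algebra K L] [IsGalois K L] (σ : Gal(L/K)) (hσ1 : σ ≠ 1) (hσ2 : σ ^ 2 ≠ 1)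
    (hd3 : ∀ x : 𝓞 L, σ • σ • σ • x = x) (w : 𝓞 L)
    (hw : w * σ • w * σ • σ • w = 1) : ∃ ε : 𝓞 L, ε ≠ 0 ∧ w * σ • ε = ε := by
  by_cases h : ∃ z : 𝓞 L, z + w * σ • z + w * σ • w * σ • σ • z ≠ 0
  · obtain ⟨z, hz⟩ := h
    refine ⟨_, hz, ?_⟩
    simp only [smul_add, smul_mul', hd3]
    linear_combination z * hw
  · exfalso
    push Not at h
    have hext : ∀ τ ρ : Gal(L/K), (∀ x : 𝓞 L, τ • x = ρ • x) → τ = ρ := by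
      intro τ ρ h
      have := (inferInstance : IsGaloisGroup Gal(L/K) (𝓞 K) (𝓞 L)).faithful
      exact FaithfulSMul.eq_of_smul_eq_smul h
    let χ : Gal(L/K) → (𝓞 L →* 𝓞 L) := fun τ => (MulSemiringAction.toRingHom Gal(L/K) (𝓞 L) τ : 𝓞 L →* 𝓞 L)
    have hχ : Function.Injective χ := by
      intro τ ρ h
      apply hext
      intro x
      exact DFunLike.congr_fun h x
    have hli := (linearIndependent_monoidHom (𝓞 L) (𝓞 L)).comp χ hχ
    rw [linearIndependent_iff'] at hli
    classical
    have hne : σ ≠ σ ^ 2 := by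
      intro h
      rw [pow_two] at h
      exact hσ1 (mul_eq_left.1 h.symm)
    have := hli {1, σ, σ ^ 2} (fun τ => if τ = 1 then 1 else if τ = σ then w else w * σ • w) (by
      rw [Finset.sum_insert (by simp [hσ1.symm, hσ2.symm]), Finset.sum_insert (by simp [hne]),
        Finset.sum_singleton]
      funext x
      simp only [if_true, if_neg hσ1, if_neg hσ2, if_neg hne.symm]
      have := h x
      change (1 : 𝓞 L) * ((1 : Gal(L/K)) • x) + (w * σ • x + w * σ • w * (σ ^ 2) • x) = 0
      rw [one_smul, pow_two, mul_smul, ← this]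
      ring) 1 (by simp)
    simp at this

theorem three_dvd_of_unramified (K L : Type*) [Field K] [NumberField K] [Field L] [NumberField L]
    [Algebra K L] [IsGalois K L] (hdeg : Module.finrank K L = 3)
    (hunr : ∀ σ : Gal(L/K), ∀ P : Ideal (𝓞 L), P.IsPrime → (∀ x : 𝓞 L, σ • x - x ∈ P) → σ = 1)
    (hroot : ∀ x : K, x ^ 3 = 1 → x = 1) : 3 ∣ NumberField.classNumber K := by
  have hcard : Nat.card Gal(L/K) = 3 := by rw [IsGalois.card_aut_eq_finrank, hdeg]
  have : Fact (Nat.Prime 3) := ⟨Nat.prime_three⟩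
  have hcyc : IsCyclic Gal(L/K) := isCyclic_of_prime_card hcard
  obtain ⟨σ, hσ⟩ := hcyc.exists_generator
  have hord : orderOf σ = 3 := by rw [orderOf_eq_card_of_forall_mem_zpowers hσ, hcard]
  have hσ3 : σ ^ 3 = 1 := hord ▸ pow_orderOf_eq_one σ
  have hall : ∀ τ : Gal(L/K), τ = 1 ∨ τ = σ ∨ τ = σ ^ 2 := by
    intro τ
    obtain ⟨k, hk⟩ := (Subgroup.mem_zpowers_iff).1 (hσ τ)
    rw [← zpow_mod_orderOf, hord] at hk
    have h1 : 0 ≤ k % 3 := Int.emod_nonneg _ (by norm_num)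
    have h2 : k % 3 < 3 := Int.emod_lt_of_pos _ (by norm_num)
    have h3 : k % 3 = 0 ∨ k % 3 = 1 ∨ k % 3 = 2 := by omega
    rw [← hk]
    push_cast
    rcases h3 with h | h | h <;> rw [h]
    · left; simp
    · right; left; simp
    · right; right; norm_cast
  have hσ1 : σ ≠ 1 := by intro h; rw [h, orderOf_one] at hord; omega
  have hσ2 : σ ^ 2 ≠ 1 := by
    intro h
    have := orderOf_dvd_of_pow_eq_one h
    rw [hord] at this; omega
  have hσ2' : σ ^ 2 ≠ σ := by
    intro h
    rw [pow_two] at h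
    exact hσ1 (mul_eq_left.1 h)
  let s : Additive (𝓞 L)ˣ →+ Additive (𝓞 L)ˣ := MonoidHom.toAdditive
    (Units.map (MulSemiringAction.toRingHom Gal(L/K) (𝓞 L) σ : 𝓞 L →* 𝓞 L))
  let i : Additive (𝓞 K)ˣ →+ Additive (𝓞 L)ˣ := MonoidHom.toAdditive
    (Units.map (algebraMap (𝓞 K) (𝓞 L) : 𝓞 K →* 𝓞 L))
  have hs : ∀ u : (𝓞 L)ˣ, (((s (Additive.ofMul u)).toMul : (𝓞 L)ˣ) : 𝓞 L) = σ • (u : 𝓞 L) :=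
    fun u => rfl
  have hi : ∀ u : (𝓞 K)ˣ, (((i (Additive.ofMul u)).toMul : (𝓞 L)ˣ) : 𝓞 L) =
    algebraMap (𝓞 K) (𝓞 L) (u : 𝓞 K) := fun u => rfl
  have hinj : Function.Injective (algebraMap (𝓞 K) (𝓞 L)) := FaithfulSMul.algebraMap_injective _ _
  have hfixK : ∀ x : 𝓞 K, σ • algebraMap (𝓞 K) (𝓞 L) x = algebraMap (𝓞 K) (𝓞 L) x := by
    intro x
    exact smul_algebraMap σ x
  have hfixK' : ∀ y : 𝓞 L, σ • y = y → ∃ x : 𝓞 K, algebraMap (𝓞 K) (𝓞 L) x = y := by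
    intro y hy
    refine Algebra.IsInvariant.isInvariant (A := 𝓞 K) (G := Gal(L/K)) y ?_
    intro τ
    rcases hall τ with h | h | h
    · rw [h, one_smul]
    · rw [h, hy]
    · rw [h, pow_two, mul_smul, hy, hy]
  have := IsUnramifiedAtInfinitePlaces_of_odd_finrank (k := K) (K := L) (by rw [hdeg]; decide)
  have hrank : Module.finrank ℤ (Additive (𝓞 L)ˣ) = 3 * Module.finrank ℤ (Additive (𝓞 K)ˣ) + 2 := by
    rw [Units.finrank_eq, Units.finrank_eq, Units.rank, Units.rank,
      IsUnramifiedAtInfinitePlaces.card_infinitePlace K L, hdeg]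
    have : 0 < Fintype.card (InfinitePlace K) := Fintype.card_pos
    omega
  obtain ⟨v, hv, hv'⟩ := abstract_unit s (by
      intro x
      apply Additive.toMul.injective
      apply Units.ext
      change σ • σ • σ • (x.toMul : 𝓞 L) = _
      rw [← mul_smul, ← mul_smul, ← pow_three', hσ3, one_smul]) i
    (by
      intro x y hxy
      apply Additive.toMul.injective
      apply Units.ext
      apply hinj
      exact congrArg (fun z => ((Additive.toMul z : (𝓞 L)ˣ) : 𝓞 L)) hxy)
    (by
      intro x
      apply Additive.toMul.injective
      apply Units.ext
      exact hfixK _)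
    (by
      intro m hm
      have h1 : σ • ((m.toMul : (𝓞 L)ˣ) : 𝓞 L) = ((m.toMul : (𝓞 L)ˣ) : 𝓞 L) :=
        congrArg (fun z => ((Additive.toMul z : (𝓞 L)ˣ) : 𝓞 L)) hm
      have h2 : σ • (((m.toMul)⁻¹ : (𝓞 L)ˣ) : 𝓞 L) = (((m.toMul)⁻¹ : (𝓞 L)ˣ) : 𝓞 L) :=
        congrArg (fun z => (((Additive.toMul z)⁻¹ : (𝓞 L)ˣ) : 𝓞 L)) hm
      obtain ⟨x, hx⟩ := hfixK' _ h1
      obtain ⟨y, hy⟩ := hfixK' _ h2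
      refine ⟨Additive.ofMul ⟨x, y, hinj ?_, hinj ?_⟩, ?_⟩
      · rw [map_mul, hx, hy, map_one, Units.mul_inv]
      · rw [map_mul, hx, hy, map_one, Units.inv_mul]
      · apply Additive.toMul.injective
        apply Units.ext
        exact hx)
    (by
      intro x hx
      apply Additive.toMul.injective
      apply Units.ext
      have h1 : ((x.toMul : (𝓞 K)ˣ) : 𝓞 K) ^ 3 = 1 := 
        congrArg (fun z => ((Additive.toMul z : (𝓞 K)ˣ) : 𝓞 K)) hx
      have h2 := hroot (((x.toMul : (𝓞 K)ˣ) : 𝓞 K) : K) (by exact_mod_cast congrArg (fun z : 𝓞 K => (z : K)) h1)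
      exact RingOfIntegers.ext h2)
    hrank
  let w : (𝓞 L)ˣ := v.toMul
  have hw : (w : 𝓞 L) * σ • (w : 𝓞 L) * σ • σ • (w : 𝓞 L) = 1 :=
    congrArg (fun z => ((Additive.toMul z : (𝓞 L)ˣ) : 𝓞 L)) hv
  have hd3 : ∀ x : 𝓞 L, σ • σ • σ • x = x := by
    intro x
    rw [← mul_smul, ← mul_smul, ← pow_three', hσ3, one_smul]
  obtain ⟨ε, hε0, hε⟩ := hilbert90_cubic σ hσ1 hσ2 hd3 (w : 𝓞 L) hw
  have hIσ : σ • Ideal.span {ε} = Ideal.span {ε} := by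
    rw [Ideal.pointwise_smul_def, Ideal.map_span, Set.image_singleton, Ideal.span_singleton_eq_span_singleton]
    exact ⟨w, by rw [mul_comm]; exact hε⟩
  obtain ⟨J, hJ⟩ := invariant_ideal_extended K L hunr (Ideal.span {ε})
    (by simpa using hε0) (by
      intro τ
      rcases hall τ with h | h | h
      · rw [h, one_smul]
      · rw [h, hIσ]
      · rw [h, pow_two, mul_smul, hIσ, hIσ])
  have hJ0 : J ≠ ⊥ := by
    rintro rfl
    rw [Ideal.map_bot] at hJ
    exact hε0 (by simpa using hJ)
  have hfr : Module.finrank (𝓞 K) (𝓞 L) = 3 := by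
    rw [← hdeg]
    exact (IsFractionRing.finrank_eq (𝓞 K) K (𝓞 L) L).symm
  have hJ3 : J ^ 3 = Ideal.span {Algebra.intNorm (𝓞 K) (𝓞 L) ε} := by
    rw [← Ideal.relNorm_singleton, hJ, Ideal.relNorm_algebraMap, hfr]
  let c : ClassGroup (𝓞 K) := ClassGroup.mk0 ⟨J, mem_nonZeroDivisors_of_ne_zero hJ0⟩
  have hc3 : c ^ 3 = 1 := by
    rw [← map_pow]
    refine (ClassGroup.mk0_eq_one_iff (I := J ^ 3) (mem_nonZeroDivisors_of_ne_zero (pow_ne_zero 3 hJ0))).2 ?_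
    rw [hJ3]
    exact ⟨_, rfl⟩
  have hc1 : c ≠ 1 := by
    intro h
    obtain ⟨β, hβ⟩ := (ClassGroup.mk0_eq_one_iff _).1 h
    have hβ' : J = Ideal.span {β} := hβ
    rw [hβ', Ideal.map_span, Set.image_singleton, Ideal.span_singleton_eq_span_singleton] at hJ
    obtain ⟨u, hu⟩ := hJ.symm
    have hβ0 : algebraMap (𝓞 K) (𝓞 L) β ≠ 0 := by
      intro h0
      rw [h0, zero_mul] at hu
      exact hε0 hu.symm
    apply hv' (Additive.ofMul u)
    rw [eq_sub_iff_add_eq]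
    apply Additive.toMul.injective
    apply Units.ext
    change (w : 𝓞 L) * σ • (u : 𝓞 L) = u
    apply mul_left_cancel₀ hβ0
    rw [hu]
    conv_rhs => rw [← hε, ← hu, smul_mul', hfixK]
    ring
  have := orderOf_eq_prime hc3 hc1
  rw [← this]
  unfold NumberField.classNumber
  exact orderOf_dvd_card

theorem unram_cubic {K L : Type*} [Field K] [NumberField K] [Field L] [NumberField L]
    [Algebra K L] [IsGalois K L] (hdeg : Module.finrank K L = 3) (A B : ℤ) (hAB : IsCoprime A B)
    (hA2 : A % 2 = 1) (hA3 : A % 3 = 1) (hB : (27 : ℤ) ∣ B) (θ : L)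
    (hθ : θ ^ 3 = 3 * A * θ + 2 * B) (hgen : ∀ σ : Gal(L/K), σ θ = θ → σ = 1)
    (σ : Gal(L/K)) (P : Ideal (𝓞 L)) (hP : P.IsPrime) (hσP : ∀ x : 𝓞 L, σ • x - x ∈ P) :
    σ = 1 := by
  by_contra hσ
  have hcard : Nat.card Gal(L/K) = 3 := by rw [IsGalois.card_aut_eq_finrank, hdeg]
  have hσ3 : σ ^ 3 = 1 := hcard ▸ pow_card_eq_one' (x := σ)
  have hint : IsIntegral ℤ θ := by
    refine ⟨Polynomial.X ^ 3 - (Polynomial.C (3 * A) * Polynomial.X + Polynomial.C (2 * B)), ?_, ?_⟩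
    · apply Polynomial.monic_X_pow_sub
      compute_degree!
    · simp only [Polynomial.eval₂_sub, Polynomial.eval₂_add, Polynomial.eval₂_mul, Polynomial.eval₂_pow, Polynomial.eval₂_X, Polynomial.eval₂_C]
      simp only [eq_intCast]
      push_cast
      linear_combination hθ
  let t0 : 𝓞 L := ⟨θ, hint⟩
  have ht0 : t0 ^ 3 = 3 * A * t0 + 2 * B := by
    apply RingOfIntegers.ext
    have : algebraMap (𝓞 L) L t0 = θ := rfl
    simp only [map_pow, map_add, map_mul, this, map_intCast, map_ofNat]
    exact hθ
  have hz : ∀ m : ℤ, σ • (m : 𝓞 L) = m := fun m => by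
    apply RingOfIntegers.ext
    exact map_intCast σ m
  have hd3 : ∀ x : 𝓞 L, σ • σ • σ • x = x := by
    intro x
    rw [← mul_smul, ← mul_smul, ← pow_three', hσ3, one_smul]
  obtain ⟨t1, ht1⟩ : ∃ t1, t1 = σ • t0 := ⟨_, rfl⟩
  obtain ⟨t2, ht2⟩ : ∃ t2, t2 = σ • t1 := ⟨_, rfl⟩
  have ht3 : σ • t2 = t0 := by rw [ht2, ht1, hd3]
  have hstep : ∀ t : 𝓞 L, t ^ 3 = 3 * A * t + 2 * B → (σ • t) ^ 3 = 3 * A * (σ • t) + 2 * B := by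
    intro t h
    have := congrArg (fun x => σ • x) h
    have h3 := hz 3
    have h2 := hz 2
    push_cast at h3 h2
    simpa only [smul_pow', smul_add, smul_mul', hz, h3, h2] using this
  have e1 := hstep t0 ht0
  rw [← ht1] at e1
  have e2 := hstep t1 e1
  rw [← ht2] at e2
  have n01 : t0 - t1 ≠ 0 := by
    intro h
    apply hσ
    apply hgen
    have : σ • t0 = t0 := by rw [← ht1, sub_eq_zero.1 h]
    exact congrArg (algebraMap (𝓞 L) L) this
  have n12 : t1 - t2 ≠ 0 := by
    intro h
    apply n01
    have : σ • (σ • (t1 - t2)) = 0 := by rw [h, smul_zero, smul_zero]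
    rwa [ht2, smul_sub, smul_sub, hd3, ← ht2, ht3] at this
  have n02 : t0 - t2 ≠ 0 := by
    intro h
    apply n01
    have : σ • (t0 - t2) = 0 := by rw [h, smul_zero]
    rw [smul_sub, ← ht1, ht3] at this
    rw [← neg_sub, this, neg_zero]
  have q01 : t0 ^ 2 + t0 * t1 + t1 ^ 2 = 3 * A := by
    apply mul_left_cancel₀ n01
    linear_combination ht0 - e1
  have q12 : t1 ^ 2 + t1 * t2 + t2 ^ 2 = 3 * A := by
    apply mul_left_cancel₀ n12
    linear_combination e1 - e2
  have hsum : t0 + t1 + t2 = 0 := by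
    apply mul_left_cancel₀ n02
    linear_combination q01 - q12
  have m01 : t1 - t0 ∈ P := ht1 ▸ hσP t0
  have m12 : t2 - t1 ∈ P := ht2 ▸ hσP t1
  have h1P : (1 : 𝓞 L) ∉ P := fun h => hP.ne_top ((Ideal.eq_top_iff_one P).2 h)
  by_cases h3 : (3 : 𝓞 L) ∈ P
  · obtain ⟨k, hk⟩ := hB
    have hintγ : IsIntegral ℤ (θ ^ 2 / 3) := by
      refine ⟨Polynomial.X ^ 3 - (Polynomial.C (2 * A) * Polynomial.X ^ 2 - Polynomial.C (A ^ 2) * Polynomial.X + Polynomial.C (4 * 27 * k ^ 2)), ?_, ?_⟩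
      · apply Polynomial.monic_X_pow_sub
        compute_degree!
      · have hk' : (B : L) = 27 * k := by exact_mod_cast congrArg (Int.cast : ℤ → L) hk
        rw [hk'] at hθ
        simp only [Polynomial.eval₂_sub, Polynomial.eval₂_add, Polynomial.eval₂_mul, Polynomial.eval₂_pow, Polynomial.eval₂_X, Polynomial.eval₂_C]
        simp only [eq_intCast]
        push_cast
        field_simp
        linear_combination (θ ^ 3 - 3 * A * θ + 2 * (27 * k)) * hθ
    let g0 : 𝓞 L := ⟨θ ^ 2 / 3, hintγ⟩
    have hg0 : 3 * g0 = t0 ^ 2 := by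
      apply RingOfIntegers.ext
      have h1 : algebraMap (𝓞 L) L t0 = θ := rfl
      have h2 : algebraMap (𝓞 L) L g0 = θ ^ 2 / 3 := rfl
      simp only [map_pow, map_mul, h1, h2, map_ofNat]
      field_simp
    have h3z := hz 3
    push_cast at h3z
    have hg1 : 3 * (σ • g0) = t1 ^ 2 := by
      rw [ht1, ← smul_pow', ← hg0, smul_mul', h3z]
    have hg2 : 3 * (σ • σ • g0) = t2 ^ 2 := by
      rw [ht2, ← smul_pow', ← hg1, smul_mul', h3z]
    have hs : g0 + σ • g0 + σ • σ • g0 = 2 * A := by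
      have h30 : (3 : 𝓞 L) ≠ 0 := by norm_num
      apply mul_left_cancel₀ h30
      have : t2 = - (t0 + t1) := by linear_combination hsum
      rw [this] at hg2
      linear_combination hg0 + hg1 + hg2 + 2 * q01
    have m1 := hσP g0
    have m2 := hσP (σ • g0)
    apply h1P
    have hA3' : (A : 𝓞 L) = 3 * ((A / 3 : ℤ) : 𝓞 L) + 1 := by
      have : A = 3 * (A / 3) + 1 := by omega
      exact_mod_cast congrArg (Int.cast : ℤ → 𝓞 L) this
    rw [hA3'] at hs
    have : (1 : 𝓞 L) = 3 * (1 + 2 * ((A / 3 : ℤ) : 𝓞 L) - g0) - 2 * (σ • g0 - g0) - (σ • σ • g0 - σ • g0) := by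
      linear_combination hs
    rw [this]
    exact P.sub_mem (P.sub_mem (P.mul_mem_right _ h3) (P.mul_mem_left _ m1)) m2
  · have k0 : 3 * t0 ∈ P := by
      have : 3 * t0 = - (2 * (t1 - t0) + (t2 - t1)) := by linear_combination hsum
      rw [this]
      exact P.neg_mem (P.add_mem (P.mul_mem_left _ m01) m12)
    have k1 : t0 ∈ P := (hP.mem_or_mem k0).resolve_left h3
    have k2 : t1 ∈ P := by
      have := P.add_mem m01 k1
      rwa [sub_add_cancel] at this
    have k3 : (3 : 𝓞 L) * A ∈ P := by
      rw [← q01]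
      have : t0 ^ 2 + t0 * t1 + t1 ^ 2 = (t0 + t1) * t0 + t1 * t1 := by ring
      rw [this]
      exact P.add_mem (P.mul_mem_left _ k1) (P.mul_mem_left _ k2)
    have k4 : (A : 𝓞 L) ∈ P := (hP.mem_or_mem k3).resolve_left h3
    have k5 : (2 : 𝓞 L) * B ∈ P := by
      have : (2 : 𝓞 L) * B = (t0 ^ 2 - 3 * A) * t0 := by linear_combination -ht0
      rw [this]
      exact P.mul_mem_left _ k1
    rcases hP.mem_or_mem k5 with h2 | hBP
    · apply h1P
      have hA2' : (A : 𝓞 L) = 2 * ((A / 2 : ℤ) : 𝓞 L) + 1 := by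
        have : A = 2 * (A / 2) + 1 := by omega
        exact_mod_cast congrArg (Int.cast : ℤ → 𝓞 L) this
      have : (1 : 𝓞 L) = A - ((A / 2 : ℤ) : 𝓞 L) * 2 := by linear_combination -hA2'
      rw [this]
      exact P.sub_mem k4 (P.mul_mem_left _ h2)
    · obtain ⟨x, y, hxy⟩ := hAB
      apply h1P
      have : (1 : 𝓞 L) = x * A + y * B := by exact_mod_cast (congrArg (Int.cast : ℤ → 𝓞 L) hxy).symm
      rw [this]
      exact P.add_mem (P.mul_mem_left _ k4) (P.mul_mem_left _ hBP)

theorem no_int_root (A B : ℤ) (hA5 : A % 5 = 4) (hB5 : B % 5 = 1) (m : ℤ) :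
    m ^ 3 - 3 * A * m - 2 * B ≠ 0 := by
  intro h
  have h' := congrArg (Int.cast : ℤ → ZMod 5) h
  have hA : ((A : ℤ) : ZMod 5) = 4 := by
    have := (ZMod.intCast_eq_intCast_iff' A 4 5).2 (by simpa using hA5)
    simpa using this
  have hB : ((B : ℤ) : ZMod 5) = 1 := by
    have := (ZMod.intCast_eq_intCast_iff' B 1 5).2 (by simpa using hB5)
    simpa using this
  push_cast at h'
  rw [hA, hB] at h'
  generalize ((m : ℤ) : ZMod 5) = x at h'
  revert x
  decide

theorem rat_sq_int (p : ℚ) (N : ℤ) (h : p ^ 2 = N) : ∃ m : ℤ, m ^ 2 = N := by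
  have hi : IsIntegral ℤ p := by
    apply IsIntegral.of_pow (n := 2) (by norm_num)
    rw [h]
    exact isIntegral_algebraMap (R := ℤ) (x := N)
  obtain ⟨m, hm⟩ := IsIntegrallyClosed.isIntegral_iff.1 hi
  refine ⟨m, ?_⟩
  rw [← hm] at h
  simp only [eq_intCast] at h
  exact_mod_cast h

theorem not_sq1 (A B : ℤ) (hA3 : A % 3 = 1) (hB : (27 : ℤ) ∣ B) (m : ℤ) :
    m ^ 2 ≠ 3 * (A ^ 3 - B ^ 2) := by
  intro h
  have h3 : (3 : ℤ) ∣ m := by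
    apply Int.prime_three.dvd_of_dvd_pow (n := 2)
    exact ⟨_, h⟩
  obtain ⟨j, rfl⟩ := h3
  obtain ⟨k, rfl⟩ := hB
  have e : A = 3 * (A / 3) + 1 := by omega
  generalize A / 3 = q at e
  subst e
  have : (1 : ℤ) = 3 * (j ^ 2 - (9 * q ^ 3 + 9 * q ^ 2 + 3 * q) + 243 * k ^ 2) := by
    nlinarith [h]
  omega

theorem not_sq2 (A B : ℤ) (hA5 : A % 5 = 4) (hB5 : B % 5 = 1) (m : ℤ) :
    m ^ 2 ≠ B ^ 2 - A ^ 3 := by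
  intro h
  have h' := congrArg (Int.cast : ℤ → ZMod 5) h
  have hA : ((A : ℤ) : ZMod 5) = 4 := by
    have := (ZMod.intCast_eq_intCast_iff' A 4 5).2 (by simpa using hA5)
    simpa using this
  have hB : ((B : ℤ) : ZMod 5) = 1 := by
    have := (ZMod.intCast_eq_intCast_iff' B 1 5).2 (by simpa using hB5)
    simpa using this
  push_cast at h'
  rw [hA, hB] at h'
  generalize ((m : ℤ) : ZMod 5) = x at h'
  revert x
  decide

theorem hroot_core {K : Type*} [Field K] [NumberField K] (hK : Module.finrank ℚ K = 2)
    (A B : ℤ) (hA3 : A % 3 = 1) (hB : (27 : ℤ) ∣ B) (hA5 : A % 5 = 4) (hB5 : B % 5 = 1)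
    (α : K) (hα : α ^ 2 = 3 * ((A : K) ^ 3 - (B : K) ^ 2)) (x : K) (hx : x ^ 3 = 1) : x = 1 := by
  by_contra hx1
  have hq : x ^ 2 + x + 1 = 0 := by
    apply mul_left_cancel₀ (sub_ne_zero.2 hx1)
    linear_combination hx
  obtain ⟨y, hy⟩ : ∃ y : K, y = 2 * x + 1 := ⟨_, rfl⟩
  have hy2 : y ^ 2 = -3 := by rw [hy]; linear_combination 4 * hq
  have hyr : ∀ r : ℚ, (r : K) ≠ y := by
    intro r hr
    rw [← hr] at hy2
    have : r ^ 2 = -3 := by exact_mod_cast hy2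
    nlinarith [sq_nonneg r]
  have hli : LinearIndependent ℚ ![(1 : K), y] := by
    rw [LinearIndependent.pair_iff' one_ne_zero]
    intro r
    rw [Rat.smul_def, mul_one]
    exact hyr r
  have hspan := hli.span_eq_top_of_card_eq_finrank (by simp [hK])
  have hm : α ∈ Submodule.span ℚ (Set.range ![(1 : K), y]) := by rw [hspan]; trivial
  rw [Matrix.range_cons, Matrix.range_cons, Matrix.range_empty, Set.union_empty, Set.singleton_union, Submodule.mem_span_pair] at hm
  obtain ⟨p, q, hpq⟩ := hm
  rw [Rat.smul_def, Rat.smul_def, mul_one] at hpq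
  have hα' : α ^ 2 = ((3 * (A ^ 3 - B ^ 2) : ℚ) : K) := by rw [hα]; push_cast; ring
  have key : ((p ^ 2 - 3 * q ^ 2 - 3 * (A ^ 3 - B ^ 2) : ℚ) : K) + ((2 * p * q : ℚ) : K) * y = 0 := by
    push_cast
    rw [← hpq] at hα
    linear_combination hα - q ^ 2 * hy2
  have h2 : 2 * p * q = 0 := by
    by_contra hne
    apply hyr (-(p ^ 2 - 3 * q ^ 2 - 3 * (A ^ 3 - B ^ 2)) / (2 * p * q))
    have hne' : ((2 * p * q : ℚ) : K) ≠ 0 := by exact_mod_cast hne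
    rw [Rat.cast_div, div_eq_iff hne', Rat.cast_neg]
    linear_combination -key
  rw [h2] at key
  have key2 : p ^ 2 - 3 * q ^ 2 - 3 * (A ^ 3 - B ^ 2) = (0 : ℚ) := by
    rw [Rat.cast_zero, zero_mul, add_zero] at key
    exact_mod_cast key
  have : p = 0 ∨ q = 0 := by simpa using h2
  rcases this with rfl | rfl
  · obtain ⟨m, hm⟩ := rat_sq_int q (B ^ 2 - A ^ 3) (by push_cast; linarith)
    exact not_sq2 A B hA5 hB5 m hm
  · obtain ⟨m, hm⟩ := rat_sq_int p (3 * (A ^ 3 - B ^ 2)) (by push_cast; linarith)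
    exact not_sq1 A B hA3 hB m hm

theorem no_root_K {K : Type*} [Field K] [NumberField K] (hK : Module.finrank ℚ K = 2)
    (A B : ℤ) (hA5 : A % 5 = 4) (hB5 : B % 5 = 1) (x : K)
    (hx : x ^ 3 - 3 * A * x - 2 * B = 0) : False := by
  let g : Polynomial ℚ := Polynomial.X ^ 3 - (Polynomial.C (3 * A : ℚ) * Polynomial.X + Polynomial.C (2 * B : ℚ))
  have hg : g.Monic := Polynomial.monic_X_pow_sub (n := 3) (by
    compute_degree!)
  have hgd : g.natDegree = 3 := by
    show (Polynomial.X ^ 3 - (Polynomial.C (3 * A : ℚ) * Polynomial.X + Polynomial.C (2 * B : ℚ))).natDegree = 3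
    compute_degree!
  have hnr : ∀ r : ℚ, r ^ 3 - 3 * A * r - 2 * B ≠ 0 := by
    intro r hr
    have hi : IsIntegral ℤ r := by
      refine ⟨Polynomial.X ^ 3 - (Polynomial.C (3 * A) * Polynomial.X + Polynomial.C (2 * B)), ?_, ?_⟩
      · apply Polynomial.monic_X_pow_sub
        compute_degree!
      · simp only [Polynomial.eval₂_sub, Polynomial.eval₂_add, Polynomial.eval₂_mul, Polynomial.eval₂_pow, Polynomial.eval₂_X, Polynomial.eval₂_C]
        simp only [eq_intCast]
        push_cast
        linear_combination hr
    obtain ⟨m, hm⟩ := IsIntegrallyClosed.isIntegral_iff.1 hi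
    rw [← hm] at hr
    simp only [eq_intCast] at hr
    exact no_int_root A B hA5 hB5 m (by exact_mod_cast hr)
  have hirr : Irreducible g := by
    rw [Polynomial.irreducible_iff_roots_eq_zero_of_degree_le_three (by omega) (by omega)]
    rw [Multiset.eq_zero_iff_forall_notMem]
    intro r hr
    have := (Polynomial.mem_roots'.1 hr).2
    apply hnr r
    simp only [g, Polynomial.IsRoot, Polynomial.eval_sub, Polynomial.eval_add, Polynomial.eval_mul, Polynomial.eval_pow, Polynomial.eval_X, Polynomial.eval_C] at this
    linear_combination this
  have hmin : g = minpoly ℚ x := by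
    apply minpoly.eq_of_irreducible_of_monic hirr _ hg
    simp only [g, map_sub, map_add, map_mul, map_pow, Polynomial.aeval_X, Polynomial.aeval_C]
    simp only [map_intCast, map_ofNat]
    linear_combination hx
  have := minpoly.degree_dvd (K := ℚ) (Algebra.IsIntegral.isIntegral (R := ℚ) x)
  rw [← hmin, hgd, hK] at this
  omega

theorem core_thm {K : Type*} [Field K] [NumberField K] (hK : Module.finrank ℚ K = 2)
    (A B : ℤ) (hAB : IsCoprime A B) (hA2 : A % 2 = 1)
    (hA3 : A % 3 = 1) (hB : (27 : ℤ) ∣ B) (hA5 : A % 5 = 4) (hB5 : B % 5 = 1)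
    (α : K) (hα : α ^ 2 = 3 * ((A : K) ^ 3 - (B : K) ^ 2)) : 3 ∣ NumberField.classNumber K := by
  obtain ⟨f, hf⟩ : ∃ f : Polynomial K, f = Polynomial.X ^ 3 - (Polynomial.C (3 * A : K) * Polynomial.X + Polynomial.C (2 * B : K)) := ⟨_, rfl⟩
  have hg : f.Monic := by
    rw [hf]
    apply Polynomial.monic_X_pow_sub
    compute_degree!
  have hgd : f.natDegree = 3 := by
    rw [hf]
    compute_degree!
  have hirr : Irreducible f := by
    rw [Polynomial.irreducible_iff_roots_eq_zero_of_degree_le_three (by omega) (by omega)]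
    rw [Multiset.eq_zero_iff_forall_notMem]
    intro r hr
    have := (Polynomial.mem_roots'.1 hr).2
    apply no_root_K hK A B hA5 hB5 r
    simp only [hf, Polynomial.IsRoot, Polynomial.eval_sub, Polynomial.eval_add, Polynomial.eval_mul, Polynomial.eval_pow, Polynomial.eval_X, Polynomial.eval_C] at this
    linear_combination this
  have : Fact (Irreducible f) := ⟨hirr⟩
  have : Module.Finite K (AdjoinRoot f) := hg.finite_adjoinRoot
  have : NumberField (AdjoinRoot f) := NumberField.of_module_finite K (AdjoinRoot f)
  have hfr : Module.finrank K (AdjoinRoot f) = 3 := by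
    rw [← hgd]
    exact finrank_quotient_span_eq_natDegree
  obtain ⟨θ, hθd⟩ : ∃ θ, θ = AdjoinRoot.root f := ⟨_, rfl⟩
  have hθ : θ ^ 3 = 3 * A * θ + 2 * B := by
    have h := AdjoinRoot.eval₂_root f
    rw [← hθd] at h
    conv at h => lhs; arg 3; rw [hf]
    simp only [Polynomial.eval₂_sub, Polynomial.eval₂_add, Polynomial.eval₂_mul, Polynomial.eval₂_pow, Polynomial.eval₂_X, Polynomial.eval₂_C] at h
    simp only [map_mul, map_intCast, map_ofNat] at h
    linear_combination h
  obtain ⟨β, hβd⟩ : ∃ β, β = algebraMap K (AdjoinRoot f) α := ⟨_, rfl⟩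
  have hβ : β ^ 2 = 3 * ((A : AdjoinRoot f) ^ 3 - (B : AdjoinRoot f) ^ 2) := by
    rw [hβd, ← map_pow, hα]
    simp only [map_mul, map_sub, map_pow, map_intCast, map_ofNat]
  have hne : θ ^ 2 - A ≠ 0 := by
    intro h
    have h1 : (A : AdjoinRoot f) * θ = - B := by
      have h2 : (2 : AdjoinRoot f) ≠ 0 := two_ne_zero
      apply mul_left_cancel₀ h2
      linear_combination -hθ + θ * h
    have h2 : (A : AdjoinRoot f) ^ 3 = B ^ 2 := by
      linear_combination (A * θ - B) * h1 - A ^ 2 * h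
    have h3 : A ^ 3 = B ^ 2 := by exact_mod_cast h2
    apply not_sq1 A B hA3 hB 0
    rw [h3]; ring
  obtain ⟨δ, hδ⟩ : ∃ δ, δ = 2 * β / (θ ^ 2 - A) := ⟨_, rfl⟩
  have hδ2 : δ ^ 2 = 12 * A - 3 * θ ^ 2 := by
    rw [hδ, div_pow, div_eq_iff (pow_ne_zero 2 hne)]
    linear_combination 4 * hβ + 3 * (θ ^ 3 - 3 * A * θ + 2 * B) * hθ
  have hsplit : (f.map (algebraMap K (AdjoinRoot f))).Splits := by
    have : f.map (algebraMap K (AdjoinRoot f)) = (Polynomial.X - Polynomial.C θ) * (Polynomial.X - Polynomial.C ((-θ + δ) / 2)) * (Polynomial.X - Polynomial.C ((-θ - δ) / 2)) := by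
      conv_lhs => arg 2; rw [hf]
      simp only [Polynomial.map_sub, Polynomial.map_add, Polynomial.map_mul, Polynomial.map_pow, Polynomial.map_X, Polynomial.map_C]
      simp only [map_mul, map_intCast, map_ofNat]
      obtain ⟨r, hr⟩ : ∃ r, r = (-θ + δ) / 2 := ⟨_, rfl⟩
      obtain ⟨s, hs⟩ : ∃ s, s = (-θ - δ) / 2 := ⟨_, rfl⟩
      rw [← hr, ← hs]
      have e1 : θ + r + s = 0 := by rw [hr, hs]; ring
      have e2 : θ * r + θ * s + r * s = - (3 * A) := by
        rw [hr, hs]; linear_combination (-1 / 4) * hδ2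
      have e3 : θ * r * s = 2 * B := by
        rw [hr, hs]; linear_combination hθ - θ / 4 * hδ2
      have c1 := congrArg Polynomial.C e1
      have c2 := congrArg Polynomial.C e2
      have c3 := congrArg Polynomial.C e3
      simp only [map_add, map_mul, map_neg, map_zero, map_ofNat, map_intCast] at c1 c2 c3
      linear_combination Polynomial.X ^ 2 * c1 - Polynomial.X * c2 + c3
    rw [this]
    exact ((Polynomial.Splits.X_sub_C _).mul (Polynomial.Splits.X_sub_C _)).mul (Polynomial.Splits.X_sub_C _)
  have : Polynomial.IsSplittingField K (AdjoinRoot f) f := by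
    refine ⟨hsplit, ?_⟩
    rw [eq_top_iff, ← AdjoinRoot.adjoinRoot_eq_top]
    apply Algebra.adjoin_mono
    rw [Set.singleton_subset_iff, Polynomial.mem_rootSet]
    refine ⟨hg.ne_zero, ?_⟩
    rw [AdjoinRoot.aeval_eq, AdjoinRoot.mk_self]
  have : IsGalois K (AdjoinRoot f) := IsGalois.of_separable_splitting_field (p := f) hirr.separable
  have hgen : ∀ σ : Gal(AdjoinRoot f/K), σ θ = θ → σ = 1 := by
    intro σ h
    apply AlgEquiv.coe_toAlgHom_injective
    apply AdjoinRoot.algHom_ext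
    rw [← hθd]
    exact h
  exact three_dvd_of_unramified (K := K) (L := AdjoinRoot f) hfr
    (unram_cubic hfr A B hAB hA2 hA3 hB θ hθ hgen)
    (hroot_core hK A B hA3 hB hA5 hB5 α hα)


end Helpers

/-- Let `n > 1` be an odd integer, and `a`, `b` integers with `a ≡ 19 (mod 30)`,
`b ≡ 6 (mod 15)` and `gcd(a, b) = 1`.  Then `3` divides the class number of
`ℚ(√(3 * (a ^ (3 * n) - b ^ (2 * n))))`. -/
theorem class_number_div_three_of_sqrt_three_mul_pow_sub_pow
    (n : ℕ) (hn : 1 < n) (hnodd : Odd n)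
    (a b : ℤ) (ha : a ≡ 19 [ZMOD 30]) (hb : b ≡ 6 [ZMOD 15]) (hgcd : Int.gcd a b = 1)
    (K : Type*) [Field K] [NumberField K] (hdeg : Module.finrank ℚ K = 2)
    (hsqrt : ∃ α : K, α ^ 2 = 3 * ((a : K) ^ (3 * n) - (b : K) ^ (2 * n))) :
    3 ∣ NumberField.classNumber K := by
  obtain ⟨α, hα⟩ := hsqrt
  have ha' : a % 30 = 19 := ha
  have hb' : b % 15 = 6 := hb
  have hn3 : 3 ≤ n := by
    obtain ⟨k, hk⟩ := hnodd
    omega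
  refine core_thm hdeg (a ^ n) (b ^ n) (Int.isCoprime_iff_gcd_eq_one.2 hgcd).pow ?_ ?_ ?_ ?_ ?_ α ?_
  · have h : a ≡ 1 [ZMOD 2] := by unfold Int.ModEq; omega
    have := h.pow n
    rwa [one_pow] at this
  · have h : a ≡ 1 [ZMOD 3] := by unfold Int.ModEq; omega
    have := h.pow n
    rwa [one_pow] at this
  · have h : (3 : ℤ) ∣ b := by omega
    exact (pow_dvd_pow_of_dvd h 3).trans (pow_dvd_pow b hn3)
  · have h : a ≡ -1 [ZMOD 5] := by unfold Int.ModEq; omega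
    have := h.pow n
    rwa [hnodd.neg_one_pow] at this
  · have h : b ≡ 1 [ZMOD 5] := by unfold Int.ModEq; omega
    have := h.pow n
    rwa [one_pow] at this
  · rw [hα]; push_cast
    rw [← pow_mul, ← pow_mul, mul_comm n 3, mul_comm n 2]
end
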